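/- Let 0<s<1, let Ω satisfy (H) with Ω(−θ)=Ω(θ) for all θ, and let a,b:[0,T)→(0,∞) be C¹ functions solving a'(t)=2·(A(a(t),b(t))−1)·a(t) and b'(t)=2·(B(a(t),b(t))−1)·b(t). Set ρ_t = ρ_{a(t),b(t)}. Then: (i) for every t∈[0,T), the gradient of the function x↦∫ W(x−y) dρ_t(y) exists at every point x in the interior of supp ρ_t and equals (2(1−A(a(t),b(t)))·x₁, 2(1−B(a(t),b(t)))·x₂); (ii) for every compactly supported C^∞ function φ:ℝ²→ℝ, the map t↦∫ φ dρ_t is differentiable on [0,T) with derivative 2·∫ ( (A(a(t),b(t))−1)·x₁·∂₁φ(x) + (B(a(t),b(t))−1)·x₂·∂₂φ(x) ) dρ_t(x), so ρ_t is a weak solution of the continuity equation ∂_t ρ + ∇·(ρ u)=0 with u=−∇W*ρ. -/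

import Mathlib

/-!
The gradient formula rests on the fact that the potential of an elliptical measure `ρ_{a,b}` is a
quadratic polynomial inside the ellipse (`potential_eq`).

* The anisotropic kernel is a superposition of one-dimensional Riesz kernels over all directions,
  `|x|^{-s} Ω(θ(x)) = τ_s ∫ |x · e_φ|^{-s} Ω̃(φ) dφ` (`kernel_eq`). This is the inversion formula
  `inversion` for `Ω̃`. Two integrations by parts turn the hypersingular integral defining `Ω̃` into
  the correlation of `Ω'' + s² Ω` with `sin^s` (`Omt_eq_corr`). On the Fourier side, the multipliers
  of `sin^{-s}`, of `sin^s` and of `d²/dθ² + s²` multiply to a constant (`sinMul_mul`), because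
  their product is invariant under `n ↦ n + 1`. The value of the constant is a Gamma function
  identity (`const_inversion`).
* Any linear form `p x₁ + q x₂` pushes `ρ₂` forward to a rescaling of one and the same marginal, a
  multiple of `(R₂² - t²)₊^{(1+s)/2}` (`map_linear_rho2`, `map_fst_rho2`). The one-dimensional Riesz
  potential of this profile is quadratic on its support (`potential_one`): a Möbius change of
  variables moves the singularity to the origin and leaves Beta integrals.
* Fubini over directions then gives a quadratic polynomial whose coefficients are the integrals
  `A`, `B`, `D` (`singular_potential`). The mixed coefficient `D` vanishes since `Ω̃` is even, and
  the confinement `|x|²` contributes `x₁² + x₂²` plus a constant, as `ρ₂` is centred of mass one.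

The interior of the support of `ρ_{a,b}` lies in the open ellipse where this formula holds, which
gives the gradient. For the continuity equation, `∫ φ dρ_{a,b} = ∫ φ(a z₁, b z₂) dρ₂(z)`, and the
right-hand side is differentiated under the integral sign (`hasDerivWithinAt_integral`).
-/

open MeasureTheory Real Filter Set Topology
open scoped ENNReal

noncomputable section

namespace Aniso

/-- The Euclidean norm on `ℝ × ℝ`. -/
def nrm (x : ℝ × ℝ) : ℝ := Real.sqrt (x.1 ^ 2 + x.2 ^ 2)

/-- The angle `θ(x) ∈ [-π, π)` of a nonzero point `x ∈ ℝ²`,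
so that `x / |x| = (cos (ang x), sin (ang x))`. -/
def ang (x : ℝ × ℝ) : ℝ :=
  if Complex.arg ⟨x.1, x.2⟩ = π then -π else Complex.arg ⟨x.1, x.2⟩

/-- The unit vector `e_φ = (cos φ, sin φ)`. -/
def eVec (φ : ℝ) : ℝ × ℝ := (Real.cos φ, Real.sin φ)

/-- The constant `τ_s = (2π)^{-s} Γ(s) cos(sπ/2)`. -/
def tauC (s : ℝ) : ℝ := (2 * π) ^ (-s) * Real.Gamma s * Real.cos (s * π / 2)

/-- The constant `c_s = π^{s-1} Γ((2-s)/2) / Γ(s/2)`. -/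
def cC (s : ℝ) : ℝ := π ^ (s - 1) * Real.Gamma ((2 - s) / 2) / Real.Gamma (s / 2)

/-- Hypothesis (H): `Ω` is smooth, 2π-periodic, strictly positive and π-periodic. -/
def SatisfiesH (Ω : ℝ → ℝ) : Prop :=
  ContDiff ℝ (⊤ : ℕ∞) Ω ∧ (∀ θ, Ω (θ + 2 * π) = Ω θ) ∧ (∀ θ, 0 < Ω θ) ∧ ∀ θ, Ω (θ + π) = Ω θ

/-- Hypothesis (h): `ω` is smooth, 2π-periodic, nonnegative, not identically zero,
π-periodic, and `ω(π/2) = 0`. -/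
def Satisfiesh (ω : ℝ → ℝ) : Prop :=
  ContDiff ℝ (⊤ : ℕ∞) ω ∧ (∀ θ, ω (θ + 2 * π) = ω θ) ∧ (∀ θ, 0 ≤ ω θ) ∧ (∃ θ, ω θ ≠ 0) ∧
    (∀ θ, ω (θ + π) = ω θ) ∧ ω (π / 2) = 0

/-- The transformed angle function `Ω̃`. -/
def Omt (s : ℝ) (Ω : ℝ → ℝ) (φ : ℝ) : ℝ :=
  tauC (2 - s) * (∫ θ in (-π)..π, |Real.cos (φ - θ)| ^ (-2 + s) * (Ω θ - Ω (φ + π / 2)))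
    + cC s * Ω (φ + π / 2)

/-- The interaction potential `W(x) = |x|^{-s} Ω(θ(x)) + |x|²` as an `[0,∞]`-valued
kernel, with `W(0) = ∞`. -/
def Wkernel (s : ℝ) (Ω : ℝ → ℝ) (x : ℝ × ℝ) : ℝ≥0∞ :=
  if x = 0 then ⊤ else ENNReal.ofReal (nrm x ^ (-s) * Ω (ang x) + nrm x ^ 2)

/-- The interaction energy `E[ρ] = (1/2) ∬ W(x-y) dρ(y) dρ(x) ∈ [0,∞]`. -/
def energy (s : ℝ) (Ω : ℝ → ℝ) (ρ : Measure (ℝ × ℝ)) : ℝ≥0∞ :=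
  (1 / 2 : ℝ≥0∞) * ∫⁻ x, ∫⁻ y, Wkernel s Ω (x - y) ∂ρ ∂ρ

/-- The real-valued interaction potential (with junk value `0` at the origin,
which is Lebesgue negligible). -/
def Wr (s : ℝ) (Ω : ℝ → ℝ) (x : ℝ × ℝ) : ℝ := nrm x ^ (-s) * Ω (ang x) + nrm x ^ 2

/-- `ρ` minimizes the energy `E` among probability measures on `ℝ²`. -/
def IsMinimizer (E : Measure (ℝ × ℝ) → ℝ≥0∞) (ρ : Measure (ℝ × ℝ)) : Prop :=
  IsProbabilityMeasure ρ ∧ ∀ μ : Measure (ℝ × ℝ), IsProbabilityMeasure μ → E ρ ≤ E μ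

/-- `ρ` is the unique minimizer of `E` up to translation: it is a minimizer and every
minimizer is a translate of it. -/
def IsUniqueMinimizer (E : Measure (ℝ × ℝ) → ℝ≥0∞) (ρ : Measure (ℝ × ℝ)) : Prop :=
  IsMinimizer E ρ ∧ ∀ μ, IsMinimizer E μ → ∃ v : ℝ × ℝ, μ = Measure.map (fun x => x + v) ρ

def R2 (s : ℝ) : ℝ := (8 * Real.sin (s * π / 2) / (s ^ 2 * (2 + s) * π)) ^ (-(1 / (s + 2)))

def C2 (s : ℝ) : ℝ := 4 * Real.sin (s * π / 2) / (s ^ 2 * π ^ 2)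

/-- The density `ρ₂(x) = C₂ (R₂² - |x|²)₊^{s/2}`. -/
def rho2 (s : ℝ) (x : ℝ × ℝ) : ℝ := C2 s * (max (R2 s ^ 2 - nrm x ^ 2) 0) ^ (s / 2)

def rho2meas (s : ℝ) : Measure (ℝ × ℝ) := volume.withDensity fun x => ENNReal.ofReal (rho2 s x)

/-- Counterclockwise rotation of `ℝ²` by the angle `η`. -/
def Rot (η : ℝ) (x : ℝ × ℝ) : ℝ × ℝ :=
  (x.1 * Real.cos η - x.2 * Real.sin η, x.1 * Real.sin η + x.2 * Real.cos η)

/-- The measure `ρ_{a,b,η}`: the pushforward of `ρ₂(x) dx` under `x ↦ R_η (a x₁, b x₂)`. -/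
def rhoE (s a b η : ℝ) : Measure (ℝ × ℝ) :=
  Measure.map (fun x => Rot η (a * x.1, b * x.2)) (rho2meas s)

/-- The measure `ρ_{a,b} = ρ_{a,b,0}`. -/
def rhoAB (s a b : ℝ) : Measure (ℝ × ℝ) := rhoE s a b 0

/-- The Beta function. -/
def BetaR (x y : ℝ) : ℝ := Real.Gamma x * Real.Gamma y / Real.Gamma (x + y)

def C1 (s : ℝ) : ℝ := 2 * Real.cos (s * π / 2) / (s * (s + 1) * π)

def R1 (s : ℝ) : ℝ := (C1 s * BetaR (1 / 2) ((3 + s) / 2)) ^ (-(1 / (s + 2)))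

/-- The density `ρ₁(t) = C₁ (R₁² - t²)₊^{(1+s)/2}` on `ℝ`. -/
def rho1 (s t : ℝ) : ℝ := C1 s * (max (R1 s ^ 2 - t ^ 2) 0) ^ ((1 + s) / 2)

def rho1meas (s : ℝ) : Measure ℝ := volume.withDensity fun t => ENNReal.ofReal (rho1 s t)

/-- The measure `ρ_{1D}`: the pushforward of `ρ₁(t) dt` under `t ↦ (0, t)`. -/
def rho1D (s : ℝ) : Measure (ℝ × ℝ) := Measure.map (fun t : ℝ => ((0 : ℝ), t)) (rho1meas s)

/-- The support of a measure: points all of whose neighborhoods have positive measure. -/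
def msupport {α : Type*} [TopologicalSpace α] [MeasurableSpace α] (μ : Measure α) : Set α :=
  {x | ∀ U ∈ 𝓝 x, 0 < μ U}

def Acoef (s : ℝ) (Ω : ℝ → ℝ) (a b : ℝ) : ℝ :=
  tauC s * (R1 s / R2 s) ^ (2 + s) *
    ∫ φ in (-π)..π,
      (a ^ 2 * Real.cos φ ^ 2 + b ^ 2 * Real.sin φ ^ 2) ^ (-(2 + s) / 2) *
        Real.cos φ ^ 2 * Omt s Ω φ

def Bcoef (s : ℝ) (Ω : ℝ → ℝ) (a b : ℝ) : ℝ :=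
  tauC s * (R1 s / R2 s) ^ (2 + s) *
    ∫ φ in (-π)..π,
      (a ^ 2 * Real.cos φ ^ 2 + b ^ 2 * Real.sin φ ^ 2) ^ (-(2 + s) / 2) *
        Real.sin φ ^ 2 * Omt s Ω φ

def Dcoef (s : ℝ) (Ω : ℝ → ℝ) (a b : ℝ) : ℝ :=
  tauC s * (R1 s / R2 s) ^ (2 + s) *
    ∫ φ in (-π)..π,
      (a ^ 2 * Real.cos φ ^ 2 + b ^ 2 * Real.sin φ ^ 2) ^ (-(2 + s) / 2) *
        (Real.cos φ * Real.sin φ) * Omt s Ω φ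

def Mfun (s : ℝ) (Ω : ℝ → ℝ) (a b : ℝ) : ℝ :=
  tauC s * (R1 s / R2 s) ^ (2 + s) *
    ∫ φ in (-π)..π, (a ^ 2 * Real.cos φ ^ 2 + b ^ 2 * Real.sin φ ^ 2) ^ (-s / 2) * Omt s Ω φ

def calE (s : ℝ) (Ω : ℝ → ℝ) (a b : ℝ) : ℝ := Mfun s Ω a b + s / 2 * (a ^ 2 + b ^ 2)

/-- A measure has compact support. -/
def HasCompactSupportM (ρ : Measure (ℝ × ℝ)) : Prop :=
  ∃ K : Set (ℝ × ℝ), IsCompact K ∧ ρ Kᶜ = 0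

/-- The linear interpolation `(1-t) ρ₀ + t ρ₁`. -/
def mix (ρ₀ ρ₁ : Measure (ℝ × ℝ)) (t : ℝ) : Measure (ℝ × ℝ) :=
  ENNReal.ofReal (1 - t) • ρ₀ + ENNReal.ofReal t • ρ₁

/-- Linear interpolation convexity (LIC): for any two distinct compactly supported
probability measures of finite energy with the same center of mass, the energy is
strictly convex along their linear interpolation. -/
def LIC (s : ℝ) (Ω : ℝ → ℝ) : Prop :=
  ∀ ρ₀ ρ₁ : Measure (ℝ × ℝ), IsProbabilityMeasure ρ₀ → IsProbabilityMeasure ρ₁ →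
    HasCompactSupportM ρ₀ → HasCompactSupportM ρ₁ →
    energy s Ω ρ₀ < ⊤ → energy s Ω ρ₁ < ⊤ → ρ₀ ≠ ρ₁ →
    (∫ x, x ∂ρ₀) = (∫ x, x ∂ρ₁) →
    StrictConvexOn ℝ (Set.Icc (0 : ℝ) 1) fun t => (energy s Ω (mix ρ₀ ρ₁ t)).toReal

/-- The interaction energy of a bounded compactly supported signed density. -/
def energyR (s : ℝ) (Ω : ℝ → ℝ) (μ : ℝ × ℝ → ℝ) : ℝ :=
  (1 / 2) * ∫ x : ℝ × ℝ, (∫ y : ℝ × ℝ, Wr s Ω (x - y) * μ y) * μ x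

/-- The logarithmic potential `W_log(x) = -ln|x| + Ω(θ(x)) + |x|²` (real valued,
with junk value at the origin). -/
def Wlog (Ω : ℝ → ℝ) (x : ℝ × ℝ) : ℝ := -Real.log (nrm x) + Ω (ang x) + nrm x ^ 2

def WlogKernel (Ω : ℝ → ℝ) (x : ℝ × ℝ) : ℝ≥0∞ :=
  if x = 0 then ⊤ else ENNReal.ofReal (Wlog Ω x)

/-- The logarithmic interaction energy. -/
def energyLog (Ω : ℝ → ℝ) (ρ : Measure (ℝ × ℝ)) : ℝ≥0∞ :=
  (1 / 2 : ℝ≥0∞) * ∫⁻ x, ∫⁻ y, WlogKernel Ω (x - y) ∂ρ ∂ρ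

/-- The family `W_{(s)}(x) = |x|^{-s} (1/s + Ω(θ(x))) - 1/s + |x|²`. -/
def Wsfam (s : ℝ) (Ω : ℝ → ℝ) (x : ℝ × ℝ) : ℝ :=
  nrm x ^ (-s) * (1 / s + Ω (ang x)) - 1 / s + nrm x ^ 2

/-- The transformed angle function of `W_{(s)}`. -/
def Omts (s : ℝ) (Ω : ℝ → ℝ) (φ : ℝ) : ℝ :=
  tauC (2 - s) * (∫ θ in (-π)..π, |Real.cos (φ - θ)| ^ (-2 + s) * (Ω θ - Ω (φ + π / 2)))
    + cC s * (1 / s + Ω (φ + π / 2))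

/-- The truncated integral appearing in the principal value defining `Ω̃_log`. -/
def pvInt (Ω : ℝ → ℝ) (φ δ : ℝ) : ℝ :=
  ∫ θ in {θ : ℝ | θ ∈ Set.Icc (-π) π ∧ δ ≤ |Real.cos (φ - θ)|},
    |Real.cos (φ - θ)| ^ (-(2 : ℝ)) * (Ω θ - Ω (φ + π / 2))

def OmtLogFam (Ω : ℝ → ℝ) (φ δ : ℝ) : ℝ :=
  -((2 * π) ^ (-(2 : ℝ))) * pvInt Ω φ δ + (2 * π)⁻¹

/-- The transformed angle function `Ω̃_log`, defined as the principal value limit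
(via `limUnder`, which returns the limit whenever it exists). -/
def OmtLog (Ω : ℝ → ℝ) (φ : ℝ) : ℝ := limUnder (𝓝[>] (0 : ℝ)) (OmtLogFam Ω φ)

/-- The closed elliptical region `B(0; a, b)`. -/
def ellipseSet (a b : ℝ) : Set (ℝ × ℝ) := {x | x.1 ^ 2 / a ^ 2 + x.2 ^ 2 / b ^ 2 ≤ 1}

def ALog (Ω : ℝ → ℝ) (a b : ℝ) : ℝ :=
  ∫ φ in (-π)..π,
    (a ^ 2 * Real.cos φ ^ 2 + b ^ 2 * Real.sin φ ^ 2)⁻¹ * Real.cos φ ^ 2 * OmtLog Ω φ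

def BLog (Ω : ℝ → ℝ) (a b : ℝ) : ℝ :=
  ∫ φ in (-π)..π,
    (a ^ 2 * Real.cos φ ^ 2 + b ^ 2 * Real.sin φ ^ 2)⁻¹ * Real.sin φ ^ 2 * OmtLog Ω φ

def DLog (Ω : ℝ → ℝ) (a b : ℝ) : ℝ :=
  ∫ φ in (-π)..π,
    (a ^ 2 * Real.cos φ ^ 2 + b ^ 2 * Real.sin φ ^ 2)⁻¹ *
      (Real.cos φ * Real.sin φ) * OmtLog Ω φ

/-- The uniform probability measure on the rotated ellipse `B(0; a, b, η)`. -/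
def unifEllipse (a b η : ℝ) : Measure (ℝ × ℝ) :=
  volume.withDensity ((Rot η '' ellipseSet a b).indicator fun _ => ENNReal.ofReal ((π * a * b)⁻¹))

/-- The pushforward of the density `(2/(πb²)) (b² - t²)₊^{1/2} dt` under `t ↦ R_η (0, t)`. -/
def semicirc (b η : ℝ) : Measure (ℝ × ℝ) :=
  Measure.map (fun t : ℝ => Rot η (0, t))
    (volume.withDensity fun t =>
      ENNReal.ofReal (2 / (π * b ^ 2) * (max (b ^ 2 - t ^ 2) 0) ^ ((1 : ℝ) / 2)))

/-- The vertical semicircle measure `ρ_{1D}` for the logarithmic case. -/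
def rho1Dlog : Measure (ℝ × ℝ) :=
  Measure.map (fun t : ℝ => ((0 : ℝ), t))
    (volume.withDensity fun t => ENNReal.ofReal (2 / π * (max (1 - t ^ 2) 0) ^ ((1 : ℝ) / 2)))

/-- The measure `ψ(t) dt` placed on the vertical axis. -/
def rhoPsi (ψ : ℝ → ℝ) : Measure (ℝ × ℝ) :=
  Measure.map (fun t : ℝ => ((0 : ℝ), t)) (volume.withDensity fun t => ENNReal.ofReal (ψ t))

/-! ### Beta integrals -/

lemma integral_Ioo_subst {a b : ℝ} {f f' : ℝ → ℝ} (g : ℝ → ℝ) (hab : a ≤ b)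
    (hf : ContinuousOn f (Icc a b)) (hff' : ∀ x ∈ Ioo a b, HasDerivAt f (f' x) x)
    (hf' : ∀ x ∈ Ioo a b, 0 ≤ f' x) :
    ∫ x in Ioo a b, f' x * g (f x) = ∫ u in Ioo (f a) (f b), g u := by
  have := integral_Icc_deriv_smul_of_deriv_nonneg (g := g) hf hff' hf' hab
  rwa [integral_Icc_eq_integral_Ioo, integral_Icc_eq_integral_Ioo] at this

lemma integral_beta_Ioo {p q : ℝ} (hp : 0 < p) (hq : 0 < q) :
    ∫ x in Ioo (0 : ℝ) 1, x ^ (p - 1) * (1 - x) ^ (q - 1)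
      = Real.Gamma p * Real.Gamma q / Real.Gamma (p + q) := by
  change _ = ProbabilityTheory.beta p q
  rw [ProbabilityTheory.beta_eq_betaIntegralReal p q hp hq,
      Complex.betaIntegral, intervalIntegral.integral_of_le (by norm_num),
      ← integral_Ioc_eq_integral_Ioo, ← RCLike.re_to_complex, ← integral_re]
  · refine setIntegral_congr_fun measurableSet_Ioc fun x ⟨hx1, hx₂⟩ ↦ ?_
    norm_cast
    rw [← Complex.ofReal_cpow, ← Complex.ofReal_cpow, RCLike.re_to_complex,
      Complex.re_mul_ofReal, Complex.ofReal_re]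
    all_goals linarith
  convert! Complex.betaIntegral_convergent (u := p) (v := q) (by simpa) (by simpa)
  rw [intervalIntegrable_iff_integrableOn_Ioc_of_le (by simp), IntegrableOn]

/-- The mass of the profile `(1 - u²)^p`, evaluated through `u = 2w - 1`
and the duplication formula. -/
lemma integral_one_sub_sq_rpow {p : ℝ} (hp : -1 < p) :
    ∫ u in Ioo (-1 : ℝ) 1, (1 - u ^ 2) ^ p
      = √π * Real.Gamma (p + 1) / Real.Gamma (p + 3 / 2) := by
  have h1 := integral_Ioo_subst (a := 0) (b := 1) (f := fun w => 2 * w - 1) (f' := fun _ => 2)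
    (fun u => (1 - u ^ 2) ^ p) zero_le_one (by fun_prop)
    (fun x _ => by simpa using ((hasDerivAt_id x).const_mul 2).sub_const 1) (fun _ _ => by norm_num)
  norm_num at h1
  rw [← h1]
  have h2 : ∫ x in Ioo (0 : ℝ) 1, (2 : ℝ) * (1 - (2 * x - 1) ^ 2) ^ p
      = ∫ x in Ioo (0 : ℝ) 1, (2 * 4 ^ p) * (x ^ (p + 1 - 1) * (1 - x) ^ (p + 1 - 1)) := by
    refine setIntegral_congr_fun measurableSet_Ioo fun x hx => ?_
    have hx1 := hx.1
    have hx2 : 0 < 1 - x := by linarith [hx.2]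
    simp only [add_sub_cancel_right]
    rw [show 1 - (2 * x - 1) ^ 2 = 4 * (x * (1 - x)) by ring,
      Real.mul_rpow (by norm_num) (by positivity), Real.mul_rpow hx1.le hx2.le]
    ring
  rw [h2, integral_const_mul, integral_beta_Ioo (by linarith) (by linarith)]
  have h3 := Real.Gamma_mul_Gamma_add_half (p + 1)
  have g1 : 0 < Real.Gamma (p + 1) := Real.Gamma_pos_of_pos (by linarith)
  have g2 : 0 < Real.Gamma (p + 3 / 2) := Real.Gamma_pos_of_pos (by linarith)
  have g3 : 0 < Real.Gamma (2 * (p + 1)) := Real.Gamma_pos_of_pos (by linarith)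
  rw [show p + 1 + 1 / 2 = p + 3 / 2 by ring] at h3
  rw [show p + 1 + (p + 1) = 2 * (p + 1) by ring]
  have h4 : (2 : ℝ) * 4 ^ p * 2 ^ (1 - 2 * (p + 1)) = 1 := by
    rw [show (4 : ℝ) = 2 ^ (2 : ℝ) by norm_num, ← Real.rpow_mul (by norm_num)]
    nth_rewrite 1 [← Real.rpow_one 2]
    rw [← Real.rpow_add (by norm_num), ← Real.rpow_add (by norm_num)]
    ring_nf
    simp
  rw [eq_div_iff g2.ne']
  calc _ = 2 * 4 ^ p * Real.Gamma (p + 1) * (Real.Gamma (p + 1) * Real.Gamma (p + 3 / 2))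
          / Real.Gamma (2 * (p + 1)) := by ring
    _ = (2 * 4 ^ p * 2 ^ (1 - 2 * (p + 1))) * Real.Gamma (p + 1) * √π *
          (Real.Gamma (2 * (p + 1)) / Real.Gamma (2 * (p + 1))) := by rw [h3]; ring
    _ = _ := by rw [h4, div_self g3.ne']; ring

/-- The integral of `sin^p` over `(0, π)`. For `p = ±s` it is the zeroth Fourier multiplier
`sinMul p 0`, which fixes the constant in the inversion formula. -/
lemma integral_sin_rpow {p : ℝ} (hp : -1 < p) :
    ∫ u in Ioo (0 : ℝ) π, sin u ^ p
      = √π * Real.Gamma ((p + 1) / 2) / Real.Gamma (p / 2 + 1) := by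
  have h1 := integral_Ioo_subst (a := 0) (b := π) (f := fun w => -cos w) (f' := fun w => sin w)
    (fun u => (1 - u ^ 2) ^ ((p - 1) / 2)) Real.pi_pos.le (by fun_prop)
    (fun x _ => by simpa using! (hasDerivAt_cos x).neg) (fun x hx => (sin_pos_of_mem_Ioo hx).le)
  norm_num at h1
  rw [integral_one_sub_sq_rpow (by linarith)] at h1
  rw [show (p + 1) / 2 = (p - 1) / 2 + 1 by ring, show p / 2 + 1 = (p - 1) / 2 + 3 / 2 by ring,
    ← h1]
  refine setIntegral_congr_fun measurableSet_Ioo fun x hx => ?_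
  have hx1 := sin_pos_of_mem_Ioo hx
  rw [← Real.sin_sq, ← Real.rpow_natCast, ← Real.rpow_mul hx1.le]
  nth_rewrite 2 [← Real.rpow_one (sin x)]
  rw [← Real.rpow_add hx1]
  congr 1
  push_cast
  ring

lemma integral_sin_rpow_pos {p : ℝ} (hp : -1 < p) : 0 < ∫ u in Ioo (0 : ℝ) π, sin u ^ p := by
  rw [integral_sin_rpow hp]
  have := Real.Gamma_pos_of_pos (s := (p + 1) / 2) (by linarith)
  have := Real.Gamma_pos_of_pos (s := p / 2 + 1) (by linarith)
  positivity

lemma integrableOn_sin_rpow {p : ℝ} (hp : -1 < p) :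
    IntegrableOn (fun u => sin u ^ p) (Ioo (0 : ℝ) π) :=
  .of_integral_ne_zero (integral_sin_rpow_pos hp).ne'

/-! ### The one-dimensional Riesz potential of `(1 - u²)^{(1+s)/2}` -/

section OneDim

variable {s t : ℝ}

/-- The Möbius map `v ↦ (t + v) / (1 + t v)` of `(0, 1)` onto `(t, 1)` moves the singularity of the
right half of the potential to the origin. -/
lemma halfPotential_eq (ht : t ∈ Ioo (-1 : ℝ) 1) :
    ∫ u in Ioo t 1, |t - u| ^ (-s) * (1 - u ^ 2) ^ ((1 + s) / 2)
      = ∫ v in Ioo (0 : ℝ) 1, (1 - t ^ 2) ^ ((3 - s) / 2) *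
          (v ^ (-s) * (1 - v ^ 2) ^ ((1 + s) / 2) * ((1 + t * v) ^ 3)⁻¹) := by
  obtain ⟨ht1, ht2⟩ := ht
  have hpos : ∀ v ∈ Icc (0 : ℝ) 1, 0 < 1 + t * v := fun v hv => by
    nlinarith [hv.1, hv.2]
  have h1 := integral_Ioo_subst (a := 0) (b := 1) (f := fun v => (t + v) / (1 + t * v))
    (f' := fun v => (1 - t ^ 2) / (1 + t * v) ^ 2)
    (fun u => |t - u| ^ (-s) * (1 - u ^ 2) ^ ((1 + s) / 2)) zero_le_one
    (ContinuousOn.div (by fun_prop) (by fun_prop) fun v hv => (hpos v hv).ne')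
    (fun v hv => by
      have := ((hasDerivAt_id v).const_add t).div (((hasDerivAt_id v).const_mul t).const_add 1)
        (hpos v (Ioo_subset_Icc_self hv)).ne'
      exact this.congr_deriv (by simp; ring))
    (fun v hv => by
      have : 0 ≤ 1 - t ^ 2 := by nlinarith
      positivity)
  have e1 : (t + 1) / (1 + t * 1) = 1 := by
    rw [mul_one, add_comm]; exact div_self (by linarith)
  simp only [mul_zero, add_zero, div_one, e1] at h1
  rw [← h1]
  refine setIntegral_congr_fun measurableSet_Ioo fun v hv => ?_
  have hD := hpos v (Ioo_subset_Icc_self hv)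
  have hl : 0 < 1 - t ^ 2 := by nlinarith
  have hv0 := hv.1
  have hv1 : 0 < 1 - v ^ 2 := by nlinarith [hv.1, hv.2]
  have r1 : |t - (t + v) / (1 + t * v)| = v * (1 - t ^ 2) / (1 + t * v) := by
    rw [show t - (t + v) / (1 + t * v) = -(v * (1 - t ^ 2) / (1 + t * v)) by field_simp; ring,
      abs_neg, abs_of_pos (by positivity)]
  have r2 : 1 - ((t + v) / (1 + t * v)) ^ 2 = (1 - t ^ 2) * (1 - v ^ 2) / (1 + t * v) ^ 2 := by
    field_simp; ring
  rw [r1, r2, Real.div_rpow (by positivity) hD.le, Real.div_rpow (by positivity) (by positivity),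
    Real.mul_rpow hv0.le hl.le, Real.mul_rpow hl.le hv1.le,
    ← Real.rpow_natCast (1 + t * v) 2, ← Real.rpow_natCast (1 + t * v) 3, ← Real.rpow_mul hD.le,
    show ((2 : ℕ) : ℝ) * ((1 + s) / 2) = 1 + s by push_cast; ring]
  have q1 : (1 + t * v) ^ ((3 : ℕ) : ℝ)
      = (1 + t * v) ^ ((2 : ℕ) : ℝ) * (1 + t * v) ^ (-s) * (1 + t * v) ^ (1 + s) := by
    rw [← Real.rpow_add hD, ← Real.rpow_add hD]; congr 1; push_cast; ring
  have q2 : (1 - t ^ 2) ^ ((3 - s) / 2)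
      = (1 - t ^ 2) * (1 - t ^ 2) ^ (-s) * (1 - t ^ 2) ^ ((1 + s) / 2) := by
    nth_rewrite 2 [← Real.rpow_one (1 - t ^ 2)]
    rw [← Real.rpow_add hl, ← Real.rpow_add hl]; congr 1; ring
  rw [q1, q2]
  have z1 : (1 + t * v) ^ (-s) ≠ 0 := (Real.rpow_pos_of_pos hD _).ne'
  have z2 : (1 + t * v) ^ (1 + s) ≠ 0 := (Real.rpow_pos_of_pos hD _).ne'
  have z3 : (1 + t * v) ^ ((2 : ℕ) : ℝ) ≠ 0 := (Real.rpow_pos_of_pos hD _).ne'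
  field_simp

lemma integrableOn_half (hs0 : 0 < s) (hs1 : s < 1) (ht : t ∈ Ioo (-1 : ℝ) 1) :
    IntegrableOn (fun v : ℝ => (1 - t ^ 2) ^ ((3 - s) / 2) *
      (v ^ (-s) * (1 - v ^ 2) ^ ((1 + s) / 2) * ((1 + t * v) ^ 3)⁻¹)) (Ioo 0 1) := by
  obtain ⟨ht1, ht2⟩ := ht
  have h := intervalIntegral.intervalIntegrable_rpow' (a := 0) (b := 1) (r := -s) (by linarith)
  have h2 : IntervalIntegrable (fun v : ℝ => v ^ (-s) *
      ((1 - v ^ 2) ^ ((1 + s) / 2) * ((1 + t * v) ^ 3)⁻¹)) volume 0 1 := by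
    apply h.mul_continuousOn
    rw [uIcc_of_le zero_le_one]
    refine ContinuousOn.mul ?_ (ContinuousOn.inv₀ (by fun_prop) fun v hv => ?_)
    · exact ContinuousOn.rpow_const (by fun_prop) fun v hv => Or.inr (by linarith)
    · have : 0 < 1 + t * v := by nlinarith [hv.1, hv.2]
      positivity
  rw [intervalIntegrable_iff_integrableOn_Ioo_of_le zero_le_one] at h2
  simp only [mul_assoc] at h2 ⊢
  exact Integrable.const_mul h2 _

/-- **Riesz potential of the semicircle-type profile.** On `(-1, 1)` the convolution of `|·|^{-s}`
with `(1 - u²)^{(1+s)/2}` is a quadratic polynomial. After the Möbius map of `halfPotential_eq` the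
two halves combine and `w = (1 - t²) v² / (1 - t² v²)` turns the integral into Beta integrals. -/
lemma potential_one (hs0 : 0 < s) (hs1 : s < 1) (ht : t ∈ Ioo (-1 : ℝ) 1) :
    ∫ u in Ioo (-1 : ℝ) 1, |t - u| ^ (-s) * (1 - u ^ 2) ^ ((1 + s) / 2)
      = π * (1 + s) / (2 * cos (s * π / 2)) * (1 - s * t ^ 2) := by
  have ht' : -t ∈ Ioo (-1 : ℝ) 1 := ⟨by linarith [ht.2], by linarith [ht.1]⟩
  have hl : 0 < 1 - t ^ 2 := by nlinarith [ht.1, ht.2]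
  have hR := halfPotential_eq (s := s) ht
  have hL := halfPotential_eq (s := s) ht'
  have hL' : ∫ u in Ioo (-t) 1, |-t - u| ^ (-s) * (1 - u ^ 2) ^ ((1 + s) / 2)
      = ∫ u in Ioo (-1) t, |t - u| ^ (-s) * (1 - u ^ 2) ^ ((1 + s) / 2) := by
    rw [← integral_Ioc_eq_integral_Ioo, ← integral_Ioc_eq_integral_Ioo,
      ← intervalIntegral.integral_of_le ht'.2.le, ← intervalIntegral.integral_of_le ht.1.le]
    have := intervalIntegral.integral_comp_neg
      (fun u => |t - u| ^ (-s) * (1 - u ^ 2) ^ ((1 + s) / 2)) (a := -t) (b := 1)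
    rw [neg_neg] at this
    rw [← this]
    congr 1
    ext u
    rw [show -t - u = -(t - -u) by ring, abs_neg, neg_sq]
  rw [hL'] at hL
  -- both halves are integrable, and their integrals are positive
  have hIR := integrableOn_half hs0 hs1 ht
  have hIL := integrableOn_half hs0 hs1 ht'
  have posint : ∀ τ ∈ Ioo (-1 : ℝ) 1, 0 < ∫ v in Ioo (0 : ℝ) 1, (1 - τ ^ 2) ^ ((3 - s) / 2) *
      (v ^ (-s) * (1 - v ^ 2) ^ ((1 + s) / 2) * ((1 + τ * v) ^ 3)⁻¹) := by
    intro τ hτ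
    have hp : ∀ v ∈ Ioo (0 : ℝ) 1, 0 < (1 - τ ^ 2) ^ ((3 - s) / 2) *
        (v ^ (-s) * (1 - v ^ 2) ^ ((1 + s) / 2) * ((1 + τ * v) ^ 3)⁻¹) := by
      intro v hv
      have a1 : 0 < 1 - τ ^ 2 := by nlinarith [hτ.1, hτ.2]
      have a2 : 0 < v := hv.1
      have a3 : 0 < 1 - v ^ 2 := by nlinarith [hv.1, hv.2]
      have a4 : 0 < 1 + τ * v := by nlinarith [hv.1, hv.2, hτ.1]
      positivity
    rw [setIntegral_pos_iff_support_of_nonneg_ae]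
    · refine lt_of_lt_of_le ?_ (measure_mono (s := Ioo (0 : ℝ) 1) fun v hv => ⟨(hp v hv).ne', hv⟩)
      simp
    · exact ae_restrict_of_forall_mem measurableSet_Ioo fun v hv => (hp v hv).le
    · exact integrableOn_half hs0 hs1 hτ
  have hiR : IntegrableOn (fun u => |t - u| ^ (-s) * (1 - u ^ 2) ^ ((1 + s) / 2)) (Ioo t 1) :=
    .of_integral_ne_zero (by rw [hR]; exact (posint t ht).ne')
  have hiL : IntegrableOn (fun u => |t - u| ^ (-s) * (1 - u ^ 2) ^ ((1 + s) / 2)) (Ioo (-1) t) :=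
    .of_integral_ne_zero (by rw [hL]; exact (posint _ ht').ne')
  have hsplit : ∫ u in Ioo (-1 : ℝ) 1, |t - u| ^ (-s) * (1 - u ^ 2) ^ ((1 + s) / 2)
      = (∫ u in Ioo (-1) t, |t - u| ^ (-s) * (1 - u ^ 2) ^ ((1 + s) / 2))
        + ∫ u in Ioo t 1, |t - u| ^ (-s) * (1 - u ^ 2) ^ ((1 + s) / 2) := by
    simp only [← integral_Ioc_eq_integral_Ioo]
    rw [← intervalIntegral.integral_of_le ht.1.le, ← intervalIntegral.integral_of_le ht.2.le,
      ← intervalIntegral.integral_of_le (by norm_num)]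
    refine (intervalIntegral.integral_add_adjacent_intervals ?_ ?_).symm
    · rwa [intervalIntegrable_iff_integrableOn_Ioo_of_le ht.1.le]
    · rwa [intervalIntegrable_iff_integrableOn_Ioo_of_le ht.2.le]
  rw [hsplit, hL, hR, ← integral_add hIL hIR]
  have hD : ∀ v ∈ Icc (0 : ℝ) 1, 0 < 1 - t ^ 2 * v ^ 2 := fun v hv => by
    have : v ^ 2 ≤ 1 := by nlinarith [hv.1, hv.2]
    nlinarith [sq_nonneg t, sq_nonneg v]
  have hsub := integral_Ioo_subst (a := 0) (b := 1)
    (f := fun v => (1 - t ^ 2) * v ^ 2 / (1 - t ^ 2 * v ^ 2))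
    (f' := fun v => 2 * (1 - t ^ 2) * v / (1 - t ^ 2 * v ^ 2) ^ 2)
    (fun w => (1 - t ^ 2) * (w ^ ((1 - s) / 2 - 1) * (1 - w) ^ ((5 + s) / 2 - 1))
      + (1 + 3 * t ^ 2) * (w ^ ((3 - s) / 2 - 1) * (1 - w) ^ ((3 + s) / 2 - 1))) zero_le_one
    (ContinuousOn.div (by fun_prop) (by fun_prop) fun v hv => (hD v hv).ne')
    (fun v hv => by
      have := (((hasDerivAt_id v).pow 2).const_mul (1 - t ^ 2)).div
        ((((hasDerivAt_id v).pow 2).const_mul (t ^ 2)).const_sub 1)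
        (hD v (Ioo_subset_Icc_self hv)).ne'
      exact this.congr_deriv (by simp; ring))
    (fun v hv => by
      have := hv.1
      positivity)
  have e1 : (1 - t ^ 2) * 1 ^ 2 / (1 - t ^ 2 * 1 ^ 2) = 1 := by
    rw [one_pow, mul_one, mul_one]; exact div_self hl.ne'
  rw [e1] at hsub
  simp only [ne_eq, OfNat.ofNat_ne_zero, not_false_eq_true, zero_pow, mul_zero, zero_div] at hsub
  have hcongr : ∫ v in Ioo (0 : ℝ) 1, ((1 - (-t) ^ 2) ^ ((3 - s) / 2) *
        (v ^ (-s) * (1 - v ^ 2) ^ ((1 + s) / 2) * ((1 + -t * v) ^ 3)⁻¹)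
      + (1 - t ^ 2) ^ ((3 - s) / 2) *
        (v ^ (-s) * (1 - v ^ 2) ^ ((1 + s) / 2) * ((1 + t * v) ^ 3)⁻¹))
      = ∫ w in Ioo (0 : ℝ) 1, ((1 - t ^ 2) * (w ^ ((1 - s) / 2 - 1) * (1 - w) ^ ((5 + s) / 2 - 1))
      + (1 + 3 * t ^ 2) * (w ^ ((3 - s) / 2 - 1) * (1 - w) ^ ((3 + s) / 2 - 1))) := by
    rw [← hsub]
    refine setIntegral_congr_fun measurableSet_Ioo fun v hv => ?_
    have hv0 := hv.1
    have hv1 : 0 < 1 - v ^ 2 := by nlinarith [hv.1, hv.2]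
    have hDv := hD v (Ioo_subset_Icc_self hv)
    have p1 : 0 < 1 + t * v := by nlinarith [hv.1, hv.2, ht.1]
    have p2 : 0 < 1 + -t * v := by nlinarith [hv.1, hv.2, ht.2]
    have w1 : 1 - (1 - t ^ 2) * v ^ 2 / (1 - t ^ 2 * v ^ 2) = (1 - v ^ 2) / (1 - t ^ 2 * v ^ 2) := by
      field_simp; ring
    have f1 : (1 - v ^ 2) ^ ((5 + s) / 2 - 1) = (1 - v ^ 2) ^ ((1 + s) / 2) * (1 - v ^ 2) := by
      nth_rewrite 3 [← Real.rpow_one (1 - v ^ 2)]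
      rw [← Real.rpow_add hv1]; congr 1; ring
    have f2 : (1 - t ^ 2 * v ^ 2) ^ ((5 + s) / 2 - 1)
        = (1 - t ^ 2 * v ^ 2) ^ ((1 + s) / 2) * (1 - t ^ 2 * v ^ 2) := by
      nth_rewrite 3 [← Real.rpow_one (1 - t ^ 2 * v ^ 2)]
      rw [← Real.rpow_add hDv]; congr 1; ring
    have f3 : (1 - t ^ 2 * v ^ 2) ^ ((1 - s) / 2 - 1)
        = ((1 - t ^ 2 * v ^ 2) ^ ((1 + s) / 2))⁻¹ := by
      rw [← Real.rpow_neg hDv.le]; congr 1; ring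
    have f4 : (1 - t ^ 2 * v ^ 2) ^ ((3 - s) / 2 - 1)
        = ((1 - t ^ 2 * v ^ 2) ^ ((1 + s) / 2))⁻¹ * (1 - t ^ 2 * v ^ 2) := by
      nth_rewrite 3 [← Real.rpow_one (1 - t ^ 2 * v ^ 2)]
      rw [← Real.rpow_neg hDv.le, ← Real.rpow_add hDv]; congr 1; ring
    have f5 : (v ^ 2) ^ ((1 - s) / 2 - 1) = v ^ (-s) * v⁻¹ := by
      rw [← Real.rpow_natCast, ← Real.rpow_mul hv0.le, ← Real.rpow_neg_one v,
        ← Real.rpow_add hv0]; congr 1; push_cast; ring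
    have f6 : (v ^ 2) ^ ((3 - s) / 2 - 1) = v ^ (-s) * v := by
      nth_rewrite 3 [← Real.rpow_one v]
      rw [← Real.rpow_natCast, ← Real.rpow_mul hv0.le,
        ← Real.rpow_add hv0]; congr 1; push_cast; ring
    have f7 : (1 - t ^ 2) ^ ((1 - s) / 2 - 1) = (1 - t ^ 2) ^ ((3 - s) / 2) * ((1 - t ^ 2) ^ 2)⁻¹ := by
      rw [← Real.rpow_natCast (1 - t ^ 2) 2, ← Real.rpow_neg hl.le, ← Real.rpow_add hl]
      congr 1; push_cast; ring
    have f8 : (1 - t ^ 2) ^ ((3 - s) / 2 - 1) = (1 - t ^ 2) ^ ((3 - s) / 2) * (1 - t ^ 2)⁻¹ := by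
      rw [← Real.rpow_neg_one (1 - t ^ 2), ← Real.rpow_add hl]
      congr 1
    have hn : 0 ≤ (1 - t ^ 2) * v ^ 2 := by positivity
    rw [w1, Real.div_rpow hn hDv.le ((1 - s) / 2 - 1), Real.div_rpow hn hDv.le ((3 - s) / 2 - 1),
      Real.div_rpow hv1.le hDv.le ((5 + s) / 2 - 1), Real.div_rpow hv1.le hDv.le ((3 + s) / 2 - 1),
      Real.mul_rpow (z := (1 - s) / 2 - 1) hl.le (sq_nonneg v),
      Real.mul_rpow (z := (3 - s) / 2 - 1) hl.le (sq_nonneg v), neg_sq, f1, f2, f3, f4, f5, f6, f7, f8,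
      show (3 + s) / 2 - 1 = (1 + s) / 2 by ring]
    have k : ((1 + -t * v) ^ 3)⁻¹ + ((1 + t * v) ^ 3)⁻¹
        = 2 * (1 + 3 * t ^ 2 * v ^ 2) / (1 - t ^ 2 * v ^ 2) ^ 3 := by
      have p3 : 1 - t * v ≠ 0 := by linarith [p2]
      rw [show 1 - t ^ 2 * v ^ 2 = (1 - t * v) * (1 + t * v) by ring,
        show 1 + -t * v = 1 - t * v by ring]
      field_simp
      ring
    have z1 : (1 - t ^ 2 * v ^ 2) ^ ((1 + s) / 2) ≠ 0 := (Real.rpow_pos_of_pos hDv _).ne'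
    rw [← mul_add, ← mul_add, k]
    generalize (1 - t ^ 2 * v ^ 2) ^ ((1 + s) / 2) = X at *
    generalize (1 - v ^ 2) ^ ((1 + s) / 2) = Y at *
    generalize (1 - t ^ 2) ^ ((3 - s) / 2) = Z at *
    generalize v ^ (-s) = U at *
    field_simp
    ring
  rw [hcongr]
  have b1 := integral_beta_Ioo (p := (1 - s) / 2) (q := (5 + s) / 2) (by linarith) (by linarith)
  have b2 := integral_beta_Ioo (p := (3 - s) / 2) (q := (3 + s) / 2) (by linarith) (by linarith)
  have G : ∀ x : ℝ, 0 < x → 0 < Real.Gamma x := fun x hx => Real.Gamma_pos_of_pos hx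
  have g1 := G ((1 - s) / 2) (by linarith)
  have g2 := G ((5 + s) / 2) (by linarith)
  have g3 := G ((3 - s) / 2) (by linarith)
  have g4 := G ((3 + s) / 2) (by linarith)
  have i1 : IntegrableOn (fun x : ℝ => x ^ ((1 - s) / 2 - 1) * (1 - x) ^ ((5 + s) / 2 - 1))
      (Ioo 0 1) := by
    refine .of_integral_ne_zero ?_
    rw [b1]
    have := G ((1 - s) / 2 + (5 + s) / 2) (by linarith)
    positivity
  have i2 : IntegrableOn (fun x : ℝ => x ^ ((3 - s) / 2 - 1) * (1 - x) ^ ((3 + s) / 2 - 1))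
      (Ioo 0 1) := by
    refine .of_integral_ne_zero ?_
    rw [b2]
    have := G ((3 - s) / 2 + (3 + s) / 2) (by linarith)
    positivity
  rw [integral_add (i1.const_mul _) (i2.const_mul _), integral_const_mul, integral_const_mul,
    b1, b2]
  have r := Real.Gamma_mul_Gamma_one_sub ((1 - s) / 2)
  rw [show 1 - (1 - s) / 2 = (1 + s) / 2 by ring,
    show π * ((1 - s) / 2) = π / 2 - s * π / 2 by ring, Real.sin_pi_div_two_sub] at r
  have G3 : Real.Gamma 3 = 2 := by
    rw [show (3 : ℝ) = 2 + 1 by norm_num, Real.Gamma_add_one (by norm_num), Real.Gamma_two]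
    norm_num
  have e2 : Real.Gamma ((3 + s) / 2) = (1 + s) / 2 * Real.Gamma ((1 + s) / 2) := by
    rw [← Real.Gamma_add_one (by linarith)]; congr 1; ring
  have e3 : Real.Gamma ((5 + s) / 2) = (3 + s) / 2 * Real.Gamma ((3 + s) / 2) := by
    rw [← Real.Gamma_add_one (by linarith)]; congr 1; ring
  have e4 : Real.Gamma ((3 - s) / 2) = (1 - s) / 2 * Real.Gamma ((1 - s) / 2) := by
    rw [← Real.Gamma_add_one (by linarith)]; congr 1; ring
  have hc : 0 < cos (s * π / 2) := cos_pos_of_mem_Ioo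
    ⟨by nlinarith [Real.pi_pos], by nlinarith [Real.pi_pos]⟩
  rw [show (1 - s) / 2 + (5 + s) / 2 = 3 by ring, show (3 - s) / 2 + (3 + s) / 2 = 3 by ring, G3,
    e3, e4, e2]
  calc _ = (Real.Gamma ((1 - s) / 2) * Real.Gamma ((1 + s) / 2)) * ((1 + s) / 2) *
        (1 - s * t ^ 2) := by ring
    _ = _ := by rw [r]; field_simp

end OneDim

/-! ### The measure `ρ₂` and its one-dimensional marginals -/

section Rho2

variable {s : ℝ}

lemma sin_half_pos (hs0 : 0 < s) (hs1 : s < 1) : 0 < sin (s * π / 2) :=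
  sin_pos_of_pos_of_lt_pi (by positivity) (by nlinarith [Real.pi_pos])

lemma cos_half_pos (hs0 : 0 < s) (hs1 : s < 1) : 0 < cos (s * π / 2) :=
  cos_pos_of_mem_Ioo ⟨by nlinarith [Real.pi_pos], by nlinarith [Real.pi_pos]⟩

lemma R2_pos (hs0 : 0 < s) (hs1 : s < 1) : 0 < R2 s := by
  have := sin_half_pos hs0 hs1
  unfold R2
  positivity

lemma C2_pos (hs0 : 0 < s) (hs1 : s < 1) : 0 < C2 s := by
  have := sin_half_pos hs0 hs1
  unfold C2
  positivity

lemma continuous_rho2 (hs0 : 0 < s) : Continuous (rho2 s) := by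
  unfold rho2 nrm
  refine continuous_const.mul (Continuous.rpow_const (by fun_prop) fun x => Or.inr (by positivity))

lemma rho2_nonneg (hs0 : 0 < s) (hs1 : s < 1) (x : ℝ × ℝ) : 0 ≤ rho2 s x := by
  have := C2_pos hs0 hs1
  unfold rho2
  positivity

lemma nrm_sq (x : ℝ × ℝ) : nrm x ^ 2 = x.1 ^ 2 + x.2 ^ 2 := Real.sq_sqrt (by positivity)

/-- Rotations preserve Lebesgue measure on `ℝ × ℝ`. -/
lemma measurePreserving_rot {p q : ℝ} (h : p ^ 2 + q ^ 2 = 1) :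
    MeasurePreserving (fun z : ℝ × ℝ => (p * z.1 + q * z.2, -q * z.1 + p * z.2)) volume volume := by
  have hn : ‖(⟨p, -q⟩ : ℂ)‖ = 1 := by
    rw [Complex.norm_def, Complex.normSq_mk, Real.sqrt_eq_one]
    linarith
  have h1 := ((Complex.volume_preserving_equiv_real_prod.comp
    (rotation ⟨⟨p, -q⟩, by simp [Submonoid.unitSphere, hn]⟩).measurePreserving).comp
    (Complex.volume_preserving_equiv_real_prod.symm _))
  suffices e : (fun z : ℝ × ℝ => (p * z.1 + q * z.2, -q * z.1 + p * z.2)) = _ from e ▸ h1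
  funext z
  refine Prod.ext ?_ ?_
  · change _ = ((⟨p, -q⟩ : ℂ) * ⟨z.1, z.2⟩).re
    rw [Complex.mul_re]
    simp
  · change _ = ((⟨p, -q⟩ : ℂ) * ⟨z.1, z.2⟩).im
    rw [Complex.mul_im]
    simp only
    ring

lemma map_rot_rho2 (hs0 : 0 < s) {p q : ℝ} (h : p ^ 2 + q ^ 2 = 1) :
    Measure.map (fun z : ℝ × ℝ => (p * z.1 + q * z.2, -q * z.1 + p * z.2)) (rho2meas s)
      = rho2meas s := by
  have hM := measurePreserving_rot h
  refine Measure.ext fun S hS => ?_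
  have hinv : ∀ z : ℝ × ℝ, rho2 s (p * z.1 + q * z.2, -q * z.1 + p * z.2) = rho2 s z := fun z => by
    unfold rho2
    rw [nrm_sq, nrm_sq]
    congr 3
    simp only
    linear_combination (-z.1 ^ 2 - z.2 ^ 2) * h
  rw [Measure.map_apply hM.measurable hS, rho2meas, withDensity_apply _ (hM.measurable hS),
    withDensity_apply _ hS]
  have hc := (continuous_rho2 hs0).measurable
  rw [← hM.setLIntegral_comp_preimage hS (by fun_prop)]
  simp only [hinv]

/-- The pushforward of `ρ₂` under a linear form only depends on the norm of the form. -/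
lemma map_linear_rho2 (hs0 : 0 < s) {p q L : ℝ} (hL : 0 < L) (h : p ^ 2 + q ^ 2 = L ^ 2) :
    Measure.map (fun z : ℝ × ℝ => p * z.1 + q * z.2) (rho2meas s)
      = Measure.map (fun z : ℝ × ℝ => L * z.1) (rho2meas s) := by
  have h1 : (p / L) ^ 2 + (q / L) ^ 2 = 1 := by field_simp; exact h
  conv_rhs => rw [← map_rot_rho2 hs0 h1]
  rw [Measure.map_map (by fun_prop) (by fun_prop)]
  congr 1
  ext z
  simp only [Function.comp]
  field_simp

lemma integral_max_rpow {p r : ℝ} (hp : 0 < p) (hr : 0 < r) (g : ℝ → ℝ) :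
    ∫ u, g u * (max (r ^ 2 - u ^ 2) 0) ^ p
      = r ^ (2 * p + 1) * ∫ v in Ioo (-1 : ℝ) 1, g (r * v) * (1 - v ^ 2) ^ p := by
  have h := Measure.integral_comp_mul_left (fun u => g u * (max (r ^ 2 - u ^ 2) 0) ^ p) r
  rw [smul_eq_mul, abs_of_pos (by positivity), eq_inv_mul_iff_mul_eq₀ hr.ne'] at h
  rw [← h, Real.rpow_add hr, Real.rpow_one, mul_comm _ r, mul_assoc,
    ← integral_indicator measurableSet_Ioo, ← integral_const_mul (r ^ (2 * p))]
  congr 2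
  ext v
  by_cases hv : v ∈ Ioo (-1 : ℝ) 1
  · have h1 : 0 < 1 - v ^ 2 := by nlinarith [hv.1, hv.2]
    rw [indicator_of_mem hv, mul_pow, show r ^ 2 - r ^ 2 * v ^ 2 = r ^ 2 * (1 - v ^ 2) by ring,
      max_eq_left (by positivity), Real.mul_rpow (by positivity) h1.le, Real.rpow_mul hr.le]
    norm_cast
    ring
  · have h1 : 1 - v ^ 2 ≤ 0 := by
      by_contra! hc
      exact hv (abs_lt.1 (by rw [← sq_lt_one_iff_abs_lt_one]; linarith))
    rw [indicator_of_notMem hv, mul_pow, max_eq_right (by nlinarith [sq_nonneg r]),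
      Real.zero_rpow hp.ne', mul_zero, mul_zero]

/-- The mass of `(1 - t²)^{(1+s)/2}`, i.e. `B(1/2, (3+s)/2)`. -/
lemma integral_profile (hs0 : 0 < s) :
    ∫ u in Ioo (-1 : ℝ) 1, (1 - u ^ 2) ^ ((1 + s) / 2) = BetaR (1 / 2) ((3 + s) / 2) := by
  rw [integral_one_sub_sq_rpow (by linarith), BetaR, Real.Gamma_one_half_eq]
  rw [show (1 + s) / 2 + 1 = (3 + s) / 2 by ring,
    show (1 + s) / 2 + 3 / 2 = 1 / 2 + (3 + s) / 2 by ring]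

lemma BetaR_pos (hs0 : 0 < s) : 0 < BetaR (1 / 2) ((3 + s) / 2) := by
  have := Real.Gamma_pos_of_pos (s := 1 / 2) (by norm_num)
  have := Real.Gamma_pos_of_pos (s := (3 + s) / 2) (by linarith)
  have := Real.Gamma_pos_of_pos (s := 1 / 2 + (3 + s) / 2) (by linarith)
  unfold BetaR
  positivity

/-- The constant of the marginal density of `ρ₂`. -/
def margC (s : ℝ) : ℝ := C2 s * ∫ u in Ioo (-1 : ℝ) 1, (1 - u ^ 2) ^ (s / 2)

/-- `ρ₂` has mass one; the Gamma factors cancel by `Γ(x+1) = xΓ(x)`. -/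
lemma margC_mul (hs0 : 0 < s) (hs1 : s < 1) :
    margC s * R2 s ^ (2 + s) * BetaR (1 / 2) ((3 + s) / 2) = 1 := by
  have hsin := sin_half_pos hs0 hs1
  have e1 : R2 s ^ (2 + s) = s ^ 2 * (2 + s) * π / (8 * sin (s * π / 2)) := by
    rw [R2, ← Real.rpow_mul (by positivity), show -(1 / (s + 2)) * (2 + s) = -1 by field_simp; ring,
      Real.rpow_neg_one, inv_div]
  have g1 := Real.Gamma_pos_of_pos (s := (3 + s) / 2) (by linarith)
  have g2 := Real.Gamma_pos_of_pos (s := s / 2 + 1) (by linarith)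
  have e2 : Real.Gamma (s / 2 + 1 + 1) = (s / 2 + 1) * Real.Gamma (s / 2 + 1) :=
    Real.Gamma_add_one (by linarith)
  rw [margC, integral_one_sub_sq_rpow (by linarith), e1, BetaR, C2, Real.Gamma_one_half_eq,
    show 1 / 2 + (3 + s) / 2 = s / 2 + 1 + 1 by ring, e2,
    show s / 2 + 3 / 2 = (3 + s) / 2 by ring]
  have hp : √π * √π = π := Real.mul_self_sqrt Real.pi_pos.le
  field_simp
  rw [show √π ^ 2 = π by rw [sq, hp]]
  ring

lemma margC_pos (hs0 : 0 < s) (hs1 : s < 1) : 0 < margC s := by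
  have h := margC_mul hs0 hs1
  have h1 := BetaR_pos hs0
  have h2 := Real.rpow_pos_of_pos (R2_pos hs0 hs1) (2 + s)
  by_contra! hc
  nlinarith [mul_pos h2 h1]

/-- The marginal of `ρ₂` is a multiple of `(R₂² - t²)₊^{(1+s)/2}`, the profile of `ρ₁`, whose
one-dimensional Riesz potential is quadratic by `potential_one`. -/
lemma map_fst_rho2 (hs0 : 0 < s) (hs1 : s < 1) :
    Measure.map (fun z : ℝ × ℝ => z.1) (rho2meas s)
      = volume.withDensity fun t =>
        ENNReal.ofReal (margC s * (max (R2 s ^ 2 - t ^ 2) 0) ^ ((1 + s) / 2)) := by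
  have hc := (continuous_rho2 hs0).measurable
  refine Measure.ext fun S hS => ?_
  rw [Measure.map_apply measurable_fst hS, rho2meas, withDensity_apply _ (measurable_fst hS),
    withDensity_apply _ hS, ← Set.prod_univ, Measure.volume_eq_prod,
    setLIntegral_prod _ (by fun_prop)]
  refine lintegral_congr fun t => ?_
  rw [Measure.restrict_univ]
  have hC := C2_pos hs0 hs1
  by_cases ht : R2 s ^ 2 - t ^ 2 ≤ 0
  · rw [max_eq_right ht, Real.zero_rpow (by linarith), mul_zero, ENNReal.ofReal_zero]
    refine (lintegral_congr fun u => ?_).trans lintegral_zero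
    rw [rho2, nrm_sq, max_eq_right (by simp only; nlinarith [sq_nonneg u]),
      Real.zero_rpow (by linarith), mul_zero, ENNReal.ofReal_zero]
  push Not at ht
  have hr : 0 < √(R2 s ^ 2 - t ^ 2) := Real.sqrt_pos.2 ht
  have hr2 : √(R2 s ^ 2 - t ^ 2) ^ 2 = R2 s ^ 2 - t ^ 2 := Real.sq_sqrt ht.le
  have hI : ∫ u, rho2 s (t, u) = margC s * (max (R2 s ^ 2 - t ^ 2) 0) ^ ((1 + s) / 2) := by
    have h := integral_max_rpow (p := s / 2) (by positivity) hr fun _ => C2 s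
    rw [hr2] at h
    simp only [rho2, nrm_sq, ← sub_sub]
    rw [h, margC, integral_const_mul, max_eq_left ht.le, Real.sqrt_eq_rpow,
      ← Real.rpow_mul ht.le, show 1 / 2 * (2 * (s / 2) + 1) = (1 + s) / 2 by ring]
    ring
  have hpos : 0 < margC s * (max (R2 s ^ 2 - t ^ 2) 0) ^ ((1 + s) / 2) := by
    have := margC_pos hs0 hs1
    have : 0 < max (R2 s ^ 2 - t ^ 2) 0 := lt_max_of_lt_left ht
    positivity
  rw [← hI] at hpos ⊢
  rw [ofReal_integral_eq_lintegral_ofReal (.of_integral_ne_zero hpos.ne')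
    (ae_of_all _ fun u => rho2_nonneg hs0 hs1 _)]

/-- Integrals of functions of a linear form against `ρ₂`, reduced to the interval `(-1, 1)`. -/
lemma integral_linear_rho2 (hs0 : 0 < s) (hs1 : s < 1) {p q L : ℝ} (hL : 0 < L)
    (h : p ^ 2 + q ^ 2 = L ^ 2) {f : ℝ → ℝ} (hf : Measurable f) :
    ∫ z, f (p * z.1 + q * z.2) ∂(rho2meas s)
      = (BetaR (1 / 2) ((3 + s) / 2))⁻¹ *
        ∫ u in Ioo (-1 : ℝ) 1, f (L * R2 s * u) * (1 - u ^ 2) ^ ((1 + s) / 2) := by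
  have hR := R2_pos hs0 hs1
  have hm := margC_pos hs0 hs1
  have hfL : Measurable fun t => f (L * t) := hf.comp (measurable_const_mul L)
  have e1 : ∫ z, f (p * z.1 + q * z.2) ∂(rho2meas s)
      = ∫ t, f (L * t) ∂(Measure.map (fun z : ℝ × ℝ => z.1) (rho2meas s)) := by
    rw [integral_map (by fun_prop) hfL.aestronglyMeasurable,
      ← integral_map (μ := rho2meas s) (φ := fun z : ℝ × ℝ => p * z.1 + q * z.2) (f := f)
        (by fun_prop) hf.aestronglyMeasurable, map_linear_rho2 hs0 hL h,
      integral_map (by fun_prop) hf.aestronglyMeasurable]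
  have hc : Continuous fun t : ℝ => margC s * (max (R2 s ^ 2 - t ^ 2) 0) ^ ((1 + s) / 2) :=
    continuous_const.mul (Continuous.rpow_const (by fun_prop) fun x => Or.inr (by positivity))
  rw [e1, map_fst_rho2 hs0 hs1, integral_withDensity_eq_integral_toReal_smul
    (by fun_prop) (ae_of_all _ fun _ => ENNReal.ofReal_lt_top)]
  have e2 : ∀ t, (ENNReal.ofReal (margC s * (max (R2 s ^ 2 - t ^ 2) 0) ^ ((1 + s) / 2))).toReal
      • f (L * t) = margC s * (f (L * t) * (max (R2 s ^ 2 - t ^ 2) 0) ^ ((1 + s) / 2)) := fun t => by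
    rw [ENNReal.toReal_ofReal (by positivity), smul_eq_mul]; ring
  simp only [e2]
  rw [integral_const_mul, integral_max_rpow (by linarith) hR fun t => f (L * t), ← mul_assoc,
    show 2 * ((1 + s) / 2) + 1 = 2 + s by ring, eq_inv_of_mul_eq_one_left (margC_mul hs0 hs1)]
  simp only [mul_assoc]

lemma isProbabilityMeasure_rho2 (hs0 : 0 < s) (hs1 : s < 1) :
    IsProbabilityMeasure (rho2meas s) := by
  have h := integral_linear_rho2 hs0 hs1 (p := 1) (q := 0) (L := 1) one_pos (by norm_num)
    (f := fun _ => 1) measurable_const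
  simp only [one_mul] at h
  rw [integral_profile hs0, inv_mul_cancel₀ (BetaR_pos hs0).ne', integral_const, smul_eq_mul,
    mul_one] at h
  refine ⟨?_⟩
  rwa [Measure.real, ENNReal.toReal_eq_one_iff] at h

lemma ae_rho2 (hs0 : 0 < s) : ∀ᵐ z ∂(rho2meas s), z.1 ^ 2 + z.2 ^ 2 < R2 s ^ 2 := by
  have hc := (continuous_rho2 hs0).measurable
  rw [rho2meas, ae_withDensity_iff (by fun_prop)]
  refine ae_of_all _ fun z hz => ?_
  by_contra! h
  refine hz ?_
  rw [rho2, nrm_sq, max_eq_right (by linarith), Real.zero_rpow (by positivity), mul_zero,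
    ENNReal.ofReal_zero]

lemma integrable_rho2_of_continuous (hs0 : 0 < s) (hs1 : s < 1) {f : ℝ × ℝ → ℝ}
    (hf : Continuous f) : Integrable f (rho2meas s) := by
  have := isProbabilityMeasure_rho2 hs0 hs1
  have hR := R2_pos hs0 hs1
  obtain ⟨C, hC⟩ := (isCompact_Icc (a := ((-R2 s, -R2 s) : ℝ × ℝ))
    (b := (R2 s, R2 s))).exists_bound_of_continuousOn hf.continuousOn
  refine Integrable.of_bound hf.aestronglyMeasurable C ?_
  filter_upwards [ae_rho2 hs0] with z hz
  have h1 : |z.1| ≤ R2 s := abs_le_of_sq_le_sq (by nlinarith [sq_nonneg z.2]) hR.le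
  have h2 : |z.2| ≤ R2 s := abs_le_of_sq_le_sq (by nlinarith [sq_nonneg z.1]) hR.le
  exact hC z ⟨⟨(abs_le.1 h1).1, (abs_le.1 h2).1⟩, ⟨(abs_le.1 h1).2, (abs_le.1 h2).2⟩⟩

lemma integral_odd_Ioo (p : ℝ) : ∫ u in Ioo (-1 : ℝ) 1, u * (1 - u ^ 2) ^ p = 0 := by
  rw [← integral_Ioc_eq_integral_Ioo, ← intervalIntegral.integral_of_le (by norm_num)]
  have h := intervalIntegral.integral_comp_neg (fun u : ℝ => u * (1 - u ^ 2) ^ p) (a := -1) (b := 1)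
  simp only [neg_sq, neg_mul, intervalIntegral.integral_neg, neg_neg] at h
  linarith

lemma integral_mean_rho2 (hs0 : 0 < s) (hs1 : s < 1) {p q : ℝ} (h : p ^ 2 + q ^ 2 = 1) :
    ∫ z, (p * z.1 + q * z.2) ∂(rho2meas s) = 0 := by
  rw [integral_linear_rho2 hs0 hs1 (L := 1) (f := fun x => x) one_pos (by rw [h]; norm_num)
    measurable_id]
  simp only [mul_assoc, integral_const_mul, integral_odd_Ioo, mul_zero]

lemma R1_rpow (hs0 : 0 < s) (hs1 : s < 1) :
    R1 s ^ (2 + s) = (C1 s * BetaR (1 / 2) ((3 + s) / 2))⁻¹ := by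
  have := cos_half_pos hs0 hs1
  have := BetaR_pos hs0
  have hC : 0 < C1 s := by unfold C1; positivity
  rw [R1, ← Real.rpow_mul (by positivity), show -(1 / (s + 2)) * (2 + s) = -1 by field_simp; ring,
      Real.rpow_neg_one]

lemma R1_pos (hs0 : 0 < s) (hs1 : s < 1) : 0 < R1 s := by
  have := cos_half_pos hs0 hs1
  have := BetaR_pos hs0
  have hC : 0 < C1 s := by unfold C1; positivity
  unfold R1
  positivity

/-- Inside the support, the potential of `|·|^{-s}` along any linear form of `ρ₂` is quadratic. -/
lemma integral_rpow_linear (hs0 : 0 < s) (hs1 : s < 1) {p q c : ℝ} (hQ : 0 < p ^ 2 + q ^ 2)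
    (hc : c ^ 2 < (p ^ 2 + q ^ 2) * R2 s ^ 2) :
    ∫ z, |c - (p * z.1 + q * z.2)| ^ (-s) ∂(rho2meas s)
      = (R1 s / R2 s) ^ (2 + s) * ((p ^ 2 + q ^ 2) ^ (-s / 2) * R2 s ^ 2 / s
        - (p ^ 2 + q ^ 2) ^ (-(2 + s) / 2) * c ^ 2) := by
  have hR := R2_pos hs0 hs1
  have hR1 := R1_pos hs0 hs1
  set Q := p ^ 2 + q ^ 2 with hQd
  set L := √Q with hLd
  have hL : 0 < L := Real.sqrt_pos.2 hQ
  have hL2 : L ^ 2 = Q := Real.sq_sqrt hQ.le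
  have hLR : 0 < L * R2 s := by positivity
  rw [integral_linear_rho2 hs0 hs1 (f := fun x => |c - x| ^ (-s)) hL hL2.symm (by fun_prop)]
  have ht : c / (L * R2 s) ∈ Ioo (-1 : ℝ) 1 := by
    refine abs_lt.1 ?_
    rw [← sq_lt_one_iff_abs_lt_one, div_pow, div_lt_one (by positivity), mul_pow, hL2]
    exact hc
  have e : ∀ u, |c - L * R2 s * u| ^ (-s) * (1 - u ^ 2) ^ ((1 + s) / 2) = (L * R2 s) ^ (-s) *
      (|c / (L * R2 s) - u| ^ (-s) * (1 - u ^ 2) ^ ((1 + s) / 2)) := fun u => by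
    rw [← mul_assoc, ← Real.mul_rpow hLR.le (abs_nonneg _)]
    congr 2
    rw [← abs_of_pos hLR, ← abs_mul, abs_of_pos hLR]
    congr 1
    field_simp
  simp only [e]
  rw [integral_const_mul, potential_one hs0 hs1 ht, Real.div_rpow hR1.le hR.le,
    R1_rpow hs0 hs1, Real.mul_rpow hL.le hR.le]
  have l1 : Q ^ (-s / 2) = L ^ (-s) := by
    rw [hLd, Real.sqrt_eq_rpow, ← Real.rpow_mul hQ.le]; congr 1; ring
  have l2 : Q ^ (-(2 + s) / 2) = L ^ (-s) / L ^ 2 := by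
    rw [hL2, ← l1, ← Real.rpow_sub_one hQ.ne']; congr 1; ring
  have l3 : R2 s ^ (2 + s) = R2 s ^ 2 / R2 s ^ (-s) := by
    rw [Real.rpow_add hR, Real.rpow_neg hR.le]
    norm_num
  have hcos := cos_half_pos hs0 hs1
  have hB := BetaR_pos hs0
  have z1 := Real.rpow_pos_of_pos hR (-s)
  rw [l1, l2, l3, C1]
  field_simp
  ring

end Rho2

/-! ### Correlation with a kernel on a half circle, and Fourier coefficients -/

/-- The correlation `θ ↦ ∫₀^π k(v) G(θ + v) dv` of a kernel on `(0, π)` with a function. -/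
def corr (k G : ℝ → ℝ) (θ : ℝ) : ℝ := ∫ v in Ioo (0 : ℝ) π, k v * G (θ + v)

/-- The `n`-th Fourier coefficient of a `π`-periodic function, without the factor `1/π`. -/
def fc (G : ℝ → ℝ) (n : ℤ) : ℂ := ∫ θ in (0 : ℝ)..π, (G θ : ℂ) * Complex.exp (-2 * Complex.I * n * θ)

lemma bounded_of_periodic {G : ℝ → ℝ} (hG : Continuous G) (hp : Function.Periodic G π) :
    ∃ C, ∀ θ, |G θ| ≤ C := by
  obtain ⟨C, hC⟩ := (isCompact_Icc (a := (0 : ℝ)) (b := π)).exists_bound_of_continuousOn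
    hG.continuousOn
  refine ⟨C, fun θ => ?_⟩
  obtain ⟨y, hy, e⟩ := hp.exists_mem_Ico₀ Real.pi_pos θ
  rw [e]
  exact hC y ⟨hy.1, hy.2.le⟩

lemma continuous_corr {k G : ℝ → ℝ} (hk : IntegrableOn k (Ioo 0 π)) (hG : Continuous G)
    (hp : Function.Periodic G π) : Continuous (corr k G) := by
  obtain ⟨C, hC⟩ := bounded_of_periodic hG hp
  refine continuous_of_dominated (bound := fun v => |k v| * C) (fun θ => ?_) (fun θ => ?_)
    (hk.abs.mul_const C) ?_
  · exact hk.aestronglyMeasurable.mul (by fun_prop)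
  · exact ae_of_all _ fun v => by
      rw [norm_mul]
      exact mul_le_mul_of_nonneg_left (hC _) (abs_nonneg _)
  · exact ae_of_all _ fun v => by fun_prop

lemma periodic_corr {k G : ℝ → ℝ} (hp : Function.Periodic G π) :
    Function.Periodic (corr k G) π := fun θ => by
  unfold corr
  refine integral_congr_ae (ae_of_all _ fun v => ?_)
  simp only
  rw [show θ + π + v = θ + v + π by ring, hp]

/-- Correlation with a kernel acts as a Fourier multiplier. -/
lemma fc_corr {k G : ℝ → ℝ} (hk : IntegrableOn k (Ioo 0 π)) (hG : Continuous G)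
    (hp : Function.Periodic G π) (n : ℤ) :
    fc (corr k G) n
      = (∫ v in Ioo (0 : ℝ) π, (k v : ℂ) * Complex.exp (2 * Complex.I * n * v)) * fc G n := by
  obtain ⟨C, hC⟩ := bounded_of_periodic hG hp
  have hexp : ∀ m : ℤ, ∀ x : ℝ, Complex.exp (-2 * Complex.I * m * (x + π : ℝ))
      = Complex.exp (-2 * Complex.I * m * x) := fun m x => by
    rw [Complex.exp_eq_exp_iff_exists_int]
    exact ⟨-m, by push_cast; ring⟩
  have hinner : ∀ v : ℝ, ∫ θ in Ioo (0 : ℝ) π,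
      (k v : ℂ) * (G (θ + v) : ℂ) * Complex.exp (-2 * Complex.I * n * θ)
      = (k v : ℂ) * Complex.exp (2 * Complex.I * n * v) * fc G n := fun v => by
    rw [← integral_Ioc_eq_integral_Ioo, ← intervalIntegral.integral_of_le Real.pi_pos.le]
    have e : ∀ θ : ℝ, (k v : ℂ) * (G (θ + v) : ℂ) * Complex.exp (-2 * Complex.I * n * θ)
        = (k v : ℂ) * Complex.exp (2 * Complex.I * n * v) *
          ((G (θ + v) : ℂ) * Complex.exp (-2 * Complex.I * n * (θ + v : ℝ))) := fun θ => by
      rw [show -2 * Complex.I * n * (θ : ℂ)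
        = 2 * Complex.I * n * v + -2 * Complex.I * n * (θ + v : ℝ) by push_cast; ring,
        Complex.exp_add]
      ring
    simp only [e]
    rw [intervalIntegral.integral_const_mul, intervalIntegral.integral_comp_add_right
      (fun θ : ℝ => (G θ : ℂ) * Complex.exp (-2 * Complex.I * n * θ)), fc]
    have hper : Function.Periodic
        (fun θ : ℝ => (G θ : ℂ) * Complex.exp (-2 * Complex.I * n * θ)) π := fun θ => by
      simp only
      rw [hp, hexp]
    have := hper.intervalIntegral_add_eq v 0
    rw [zero_add] at this
    rw [zero_add, add_comm π v, this]
  have hcast : ∀ θ : ℝ, ((corr k G θ : ℝ) : ℂ) * Complex.exp (-2 * Complex.I * n * θ)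
      = ∫ v in Ioo (0 : ℝ) π, (k v : ℂ) * (G (θ + v) : ℂ) * Complex.exp (-2 * Complex.I * n * θ) :=
    fun θ => by
      rw [integral_mul_const, corr, ← integral_complex_ofReal]
      simp only [Complex.ofReal_mul]
  rw [fc, intervalIntegral.integral_of_le Real.pi_pos.le, integral_Ioc_eq_integral_Ioo]
  simp only [hcast]
  rw [integral_integral_swap]
  · simp only [hinner]
    rw [integral_mul_const]
  · have h1 : Integrable (fun z : ℝ × ℝ => (k z.2 : ℂ))
        ((volume.restrict (Ioo (0 : ℝ) π)).prod (volume.restrict (Ioo (0 : ℝ) π))) :=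
      Integrable.comp_snd (f := fun v => (k v : ℂ)) (Integrable.ofReal hk) _
    have h2 := h1.mul_bdd (c := C)
      (g := fun z : ℝ × ℝ => (G (z.1 + z.2) : ℂ) * Complex.exp (-2 * Complex.I * n * z.1))
      (Continuous.aestronglyMeasurable (by fun_prop)) (ae_of_all _ fun z => by
        rw [norm_mul, Complex.norm_real, Complex.norm_exp]
        simpa using hC (z.1 + z.2))
    simpa only [Function.uncurry_def, mul_assoc] using h2

/-- A continuous periodic function is determined by its Fourier coefficients. -/
lemma eq_of_fc_eq {f g : ℝ → ℝ} (hf : Continuous f) (hg : Continuous g)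
    (hfp : Function.Periodic f π) (hgp : Function.Periodic g π) (h : ∀ n, fc f n = fc g n) :
    f = g := by
  have : Fact (0 < π) := ⟨Real.pi_pos⟩
  have hdp : Function.Periodic (fun θ => ((f θ - g θ : ℝ) : ℂ)) π := fun θ => by
    simp only; rw [hfp, hgp]
  have hdc : Continuous fun θ => ((f θ - g θ : ℝ) : ℂ) := by fun_prop
  let D : C(AddCircle π, ℂ) := ⟨hdp.lift, hdc.quotient_liftOn' _⟩
  have hD : ∀ n, fourierCoeff D n = 0 := fun n => by
    rw [fourierCoeff_eq_intervalIntegral _ n 0]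
    have e : ∀ x : ℝ, fourier (-n) (x : AddCircle π) • D x
        = (f x : ℂ) * Complex.exp (-2 * Complex.I * n * x)
          - (g x : ℂ) * Complex.exp (-2 * Complex.I * n * x) := fun x => by
      rw [fourier_coe_apply, smul_eq_mul, ← sub_mul, mul_comm]
      have : D x = ((f x - g x : ℝ) : ℂ) := rfl
      rw [this, Complex.ofReal_sub]
      congr 2
      have : (π : ℂ) ≠ 0 := Complex.ofReal_ne_zero.2 Real.pi_ne_zero
      push_cast
      field_simp
    simp only [e]
    rw [zero_add, intervalIntegral.integral_sub (Continuous.intervalIntegrable (by fun_prop) _ _)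
      (Continuous.intervalIntegrable (by fun_prop) _ _)]
    have := h n
    unfold fc at this
    rw [this, sub_self, smul_zero]
  have hs := has_pointwise_sum_fourier_series_of_summable (f := D)
    (by simp only [funext hD]; exact summable_zero)
  ext θ
  have h0 := (hs θ).unique (by simp only [hD, zero_smul]; exact hasSum_zero)
  have h1 : ((f θ - g θ : ℝ) : ℂ) = 0 := h0
  exact sub_eq_zero.1 (by exact_mod_cast h1)

/-! ### Fourier multipliers of powers of the sine -/

/-- The Fourier multiplier `∫₀^π sin^p(v) e^{2inv} dv` of correlation with `sin^p`. -/
def sinMul (p : ℝ) (n : ℤ) : ℂ :=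
  ∫ v in Ioo (0 : ℝ) π, ((sin v ^ p : ℝ) : ℂ) * Complex.exp (2 * Complex.I * n * v)

lemma sinMul_zero (p : ℝ) : sinMul p 0 = ((∫ v in Ioo (0 : ℝ) π, sin v ^ p : ℝ) : ℂ) := by
  rw [sinMul, ← integral_complex_ofReal]
  simp

lemma integrable_sinMul {p : ℝ} (hp : -1 < p) (n : ℤ) :
    IntegrableOn (fun v : ℝ => ((sin v ^ p : ℝ) : ℂ) * Complex.exp (2 * Complex.I * n * v))
      (Ioo 0 π) :=
  (Integrable.ofReal (integrableOn_sin_rpow hp)).mul_bdd (c := 1)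
    (Continuous.aestronglyMeasurable (by fun_prop)) (ae_of_all _ fun v => by
      rw [Complex.norm_exp]; simp)

/-- Recursion for the multipliers: integrate the derivative of `sin^{p+1}(v) e^{i(2n+1)v}`. -/
lemma sinMul_succ {p : ℝ} (hp : -1 < p) (n : ℤ) :
    (p + 2 + 2 * n) * sinMul p (n + 1) + (p - 2 * n) * sinMul p n = 0 := by
  have hI1 := integrable_sinMul hp (n + 1)
  have hI2 := integrable_sinMul hp n
  set F : ℝ → ℂ := fun v => ((sin v ^ (p + 1) : ℝ) : ℂ) * Complex.exp (Complex.I * (2 * n + 1) * v)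
  set f : ℝ → ℂ := fun v => (p + 2 + 2 * n) / 2 *
      (((sin v ^ p : ℝ) : ℂ) * Complex.exp (2 * Complex.I * (n + 1 : ℤ) * v))
    + (p - 2 * n) / 2 * (((sin v ^ p : ℝ) : ℂ) * Complex.exp (2 * Complex.I * n * v))
  have hcont : ContinuousOn F (Icc 0 π) := by
    refine ContinuousOn.mul ?_ (Continuous.continuousOn (by fun_prop))
    refine Complex.continuous_ofReal.comp_continuousOn ?_
    exact ContinuousOn.rpow_const (by fun_prop) fun v hv => Or.inr (by linarith)
  have hderiv : ∀ v ∈ Ioo (0 : ℝ) π, HasDerivAt F (f v) v := fun v hv => by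
    have hs := sin_pos_of_mem_Ioo hv
    have h1 := ((Real.hasDerivAt_sin v).rpow_const (p := p + 1) (Or.inl hs.ne')).ofReal_comp
    have h2 : HasDerivAt (fun v : ℝ => Complex.exp (Complex.I * (2 * n + 1) * v))
        (Complex.exp (Complex.I * (2 * n + 1) * v) * (Complex.I * (2 * n + 1) * 1)) v :=
      ((hasDerivAt_id v).ofReal_comp.const_mul _).cexp
    refine (h1.mul h2).congr_deriv ?_
    have e1 : Complex.exp (2 * Complex.I * (n + 1 : ℤ) * v)
        = Complex.exp (Complex.I * (2 * n + 1) * v) * Complex.exp (v * Complex.I) := by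
      rw [← Complex.exp_add]; congr 1; push_cast; ring
    have e2 : Complex.exp (2 * Complex.I * n * v)
        = Complex.exp (Complex.I * (2 * n + 1) * v) * Complex.exp (-v * Complex.I) := by
      rw [← Complex.exp_add]; congr 1; ring
    have e3 : Complex.exp (v * Complex.I) = Real.cos v + Real.sin v * Complex.I := by
      rw [Complex.exp_mul_I]; push_cast; rfl
    have e4 : Complex.exp (-v * Complex.I) = Real.cos v - Real.sin v * Complex.I := by
      rw [Complex.exp_mul_I, Complex.cos_neg, Complex.sin_neg]; push_cast; ring
    have e5 : sin v ^ (p + 1) = sin v ^ p * sin v := Real.rpow_add_one hs.ne' p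
    simp only [f]
    rw [e1, e2, e3, e4, add_sub_cancel_right, e5]
    push_cast
    ring
  have hint : IntervalIntegrable f volume 0 π := by
    rw [intervalIntegrable_iff_integrableOn_Ioo_of_le Real.pi_pos.le]
    exact (hI1.const_mul _).add (hI2.const_mul _)
  have key := intervalIntegral.integral_eq_sub_of_hasDerivAt_of_le Real.pi_pos.le hcont hderiv hint
  have h0 : F π - F 0 = 0 := by
    simp [F, Real.zero_rpow (show p + 1 ≠ 0 by linarith)]
  rw [h0, intervalIntegral.integral_of_le Real.pi_pos.le, integral_Ioc_eq_integral_Ioo] at key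
  simp only [f] at key
  rw [integral_add (hI1.const_mul _) (hI2.const_mul _), integral_const_mul,
    integral_const_mul] at key
  rw [sinMul, sinMul]
  linear_combination 2 * key

/-- The multipliers of `sin^{-s}`, `sin^s` and `s² + d²/dθ²` multiply to a constant. -/
lemma sinMul_mul {s : ℝ} (hs0 : 0 < s) (hs1 : s < 1) (n : ℤ) :
    sinMul (-s) n * sinMul s n * (s ^ 2 - 4 * n ^ 2) = s ^ 2 * sinMul (-s) 0 * sinMul s 0 := by
  have step : ∀ n : ℤ, sinMul (-s) (n + 1) * sinMul s (n + 1) * (s ^ 2 - 4 * (n + 1 : ℤ) ^ 2)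
      = sinMul (-s) n * sinMul s n * (s ^ 2 - 4 * n ^ 2) := fun n => by
    have h1 := sinMul_succ (p := s) (by linarith) n
    have h2 := sinMul_succ (p := -s) (by linarith) n
    push_cast at h1 h2 ⊢
    linear_combination (-(-s + 2 + 2 * n) * sinMul (-s) (n + 1)) * h1
      + ((s - 2 * n) * sinMul s n) * h2
  induction n using Int.induction_on with
  | zero => push_cast; ring
  | succ n ih => rw [step, ih]
  | pred n ih =>
    rw [← ih, ← step]
    simp

lemma fc_deriv2 {Ω : ℝ → ℝ} (hΩ : ContDiff ℝ 2 Ω) (hp : Function.Periodic Ω π) (s : ℝ) (n : ℤ) :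
    fc (fun θ => deriv (deriv Ω) θ + s ^ 2 * Ω θ) n = (s ^ 2 - 4 * n ^ 2) * fc Ω n := by
  have hd1 : ContDiff ℝ 1 (deriv Ω) := ContDiff.deriv' (n := 1) (by rwa [one_add_one_eq_two])
  have hc2 : Continuous (deriv (deriv Ω)) := hd1.continuous_deriv le_rfl
  have hc0 : Continuous Ω := hΩ.continuous
  have hpd : deriv Ω π = deriv Ω 0 := by
    have : (fun θ => Ω (θ + π)) = Ω := funext hp
    have h2 := deriv_comp_add_const (f := Ω) π 0
    rw [this, zero_add] at h2
    exact h2.symm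
  have hp0 : Ω π = Ω 0 := by simpa using hp 0
  have hderiv : ∀ θ : ℝ, HasDerivAt (fun θ : ℝ => (((deriv Ω θ : ℝ) : ℂ) + 2 * Complex.I * n * Ω θ)
        * Complex.exp (-2 * Complex.I * n * θ))
      ((((deriv (deriv Ω) θ : ℝ) : ℂ) + 4 * n ^ 2 * Ω θ) * Complex.exp (-2 * Complex.I * n * θ)) θ :=
    fun θ => by
      have h1 := ((hd1.differentiable one_ne_zero) θ).hasDerivAt.ofReal_comp
      have h2 := ((hΩ.differentiable two_ne_zero) θ).hasDerivAt.ofReal_comp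
      have h3 : HasDerivAt (fun v : ℝ => Complex.exp (-2 * Complex.I * n * v))
          (Complex.exp (-2 * Complex.I * n * θ) * (-2 * Complex.I * n * 1)) θ :=
        ((hasDerivAt_id θ).ofReal_comp.const_mul _).cexp
      refine ((h1.add (h2.const_mul (2 * Complex.I * n))).mul h3).congr_deriv ?_
      simp only [Pi.add_apply]
      linear_combination (-4 * n ^ 2 * (Ω θ : ℂ) * Complex.exp (-2 * Complex.I * n * θ)) * Complex.I_sq
  have key := intervalIntegral.integral_eq_sub_of_hasDerivAt (a := 0) (b := π)
    (fun θ _ => hderiv θ) (Continuous.intervalIntegrable (by fun_prop) _ _)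
  have hexp : Complex.exp (-2 * Complex.I * n * π) = Complex.exp (-2 * Complex.I * n * (0 : ℝ)) := by
    rw [Complex.exp_eq_exp_iff_exists_int]
    exact ⟨-n, by push_cast; ring⟩
  rw [hpd, hp0, hexp, sub_self] at key
  have e : fc (fun θ => deriv (deriv Ω) θ + s ^ 2 * Ω θ) n - (s ^ 2 - 4 * n ^ 2) * fc Ω n
      = ∫ θ in (0 : ℝ)..π, (((deriv (deriv Ω) θ : ℝ) : ℂ) + 4 * n ^ 2 * Ω θ) *
        Complex.exp (-2 * Complex.I * n * θ) := by
    rw [fc, fc, ← intervalIntegral.integral_const_mul, ← intervalIntegral.integral_sub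
      (Continuous.intervalIntegrable (by fun_prop) _ _)
      (Continuous.intervalIntegrable (by fun_prop) _ _)]
    congr 1
    ext θ
    push_cast
    ring
  rw [key] at e
  exact sub_eq_zero.1 e

/-! ### The transformed angle function and its inversion -/

section Inversion

variable {s : ℝ} {Ω : ℝ → ℝ}

/-- Integral over `(-π, π)` of a `π`-periodic function, computed on any period. -/
lemma integral_two_periods {H : ℝ → ℝ} (hH : Function.Periodic H π) (c : ℝ)
    (hi : IntegrableOn (fun u => H (c + u)) (Ioo 0 π)) :
    ∫ φ in (-π)..π, H φ = 2 * ∫ u in Ioo (0 : ℝ) π, H (c + u) := by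
  have h1 : IntervalIntegrable (fun u => H (c + u)) volume 0 π := by
    rwa [intervalIntegrable_iff_integrableOn_Ioo_of_le Real.pi_pos.le]
  have h2 : IntervalIntegrable H volume c (c + π) := by
    have := h1.comp_sub_right c
    simpa [add_comm] using this
  have h3 : ∀ x y, IntervalIntegrable H volume x y := fun x y =>
    hH.intervalIntegrable Real.pi_ne_zero h2 x y
  rw [← integral_Ioc_eq_integral_Ioo, ← intervalIntegral.integral_of_le Real.pi_pos.le,
    intervalIntegral.integral_comp_add_left, add_zero,
    ← intervalIntegral.integral_add_adjacent_intervals (h3 (-π) 0) (h3 0 π)]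
  have e1 := hH.intervalIntegral_add_eq (-π) c
  have e2 := hH.intervalIntegral_add_eq 0 c
  rw [neg_add_cancel] at e1
  rw [zero_add] at e2
  rw [e1, e2]
  ring

/-- The constant `c_s` in terms of `τ_{2-s}`; this is what makes the constant part of `Ω` consistent
in `Omt_eq_corr`. -/
lemma cC_eq (hs0 : 0 < s) (hs1 : s < 1) :
    cC s = 2 * tauC (2 - s) * s / (s - 1) * ∫ u in Ioo (0 : ℝ) π, sin u ^ s := by
  have hcos := cos_half_pos hs0 hs1
  have g1 := Real.Gamma_pos_of_pos (s := (1 - s) / 2) (by linarith)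
  have g2 := Real.Gamma_pos_of_pos (s := s / 2) (by linarith)
  have d := Real.Gamma_mul_Gamma_add_half ((1 - s) / 2)
  rw [show (1 - s) / 2 + 1 / 2 = (2 - s) / 2 by ring, show 2 * ((1 - s) / 2) = 1 - s by ring,
    sub_sub_cancel] at d
  have r := Real.Gamma_mul_Gamma_one_sub ((1 - s) / 2)
  rw [show 1 - (1 - s) / 2 = (s + 1) / 2 by ring,
    show π * ((1 - s) / 2) = π / 2 - s * π / 2 by ring, Real.sin_pi_div_two_sub] at r
  have e1 : Real.Gamma (s / 2 + 1) = s / 2 * Real.Gamma (s / 2) :=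
    Real.Gamma_add_one (by positivity)
  have e2 : Real.Gamma (2 - s) = (1 - s) * Real.Gamma (1 - s) := by
    rw [← Real.Gamma_add_one (by linarith)]; congr 1; ring
  have e3 : cos ((2 - s) * π / 2) = -cos (s * π / 2) := by
    rw [show (2 - s) * π / 2 = π - s * π / 2 by ring, Real.cos_pi_sub]
  have p1 : (2 * π) ^ (-(2 - s)) = 2 ^ s * π ^ s / (4 * π ^ 2) := by
    rw [show -(2 - s) = s - (2 : ℕ) by push_cast; ring, Real.rpow_sub_natCast (by positivity),
      Real.mul_rpow (by norm_num) Real.pi_pos.le]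
    ring
  have p2 : π ^ (s - 1) = π ^ s / π := Real.rpow_sub_one Real.pi_ne_zero s
  have hs : √π ^ 2 = π := Real.sq_sqrt Real.pi_pos.le
  rw [integral_sin_rpow (by linarith), cC, tauC, e1, e2, e3, p1, p2]
  have z : s - 1 ≠ 0 := by linarith
  have z3 : 1 - s ≠ 0 := by linarith
  have z2 : Real.Gamma ((s + 1) / 2) = π / cos (s * π / 2) / Real.Gamma ((1 - s) / 2) := by
    field_simp
    field_simp at r
    linear_combination r
  have z4 : Real.Gamma ((2 - s) / 2) = Real.Gamma (1 - s) * 2 ^ s * √π / Real.Gamma ((1 - s) / 2) := by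
    field_simp
    linear_combination d
  rw [z2, z4]
  generalize cos (s * π / 2) = c at *
  field_simp
  ring

/-- The inversion formula for `Ω = 1`, where `Ω̃` is the constant `c_s`. -/
lemma const_inversion (hs0 : 0 < s) (hs1 : s < 1) :
    2 * cC s * tauC s * ∫ u in Ioo (0 : ℝ) π, sin u ^ (-s) = 1 := by
  have hcos := cos_half_pos hs0 hs1
  have g1 := Real.Gamma_pos_of_pos (s := (1 - s) / 2) (by linarith)
  have g2 := Real.Gamma_pos_of_pos (s := s / 2) (by linarith)
  have g3 := Real.Gamma_pos_of_pos (s := (2 - s) / 2) (by linarith)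
  have d := Real.Gamma_mul_Gamma_add_half (s / 2)
  rw [show s / 2 + 1 / 2 = (s + 1) / 2 by ring, show 2 * (s / 2) = s by ring,
    Real.rpow_sub (by norm_num), Real.rpow_one] at d
  have r := Real.Gamma_mul_Gamma_one_sub ((1 - s) / 2)
  rw [show 1 - (1 - s) / 2 = (s + 1) / 2 by ring,
    show π * ((1 - s) / 2) = π / 2 - s * π / 2 by ring, Real.sin_pi_div_two_sub] at r
  have p1 : (2 * π) ^ (-s) = (2 ^ s * π ^ s)⁻¹ := by
    rw [Real.rpow_neg (by positivity), Real.mul_rpow (by norm_num) Real.pi_pos.le]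
  have p2 : π ^ (s - 1) = π ^ s / π := Real.rpow_sub_one Real.pi_ne_zero s
  rw [integral_sin_rpow (by linarith), cC, tauC, show (-s + 1) / 2 = (1 - s) / 2 by ring,
    show -s / 2 + 1 = (2 - s) / 2 by ring, p1, p2]
  have z4 : Real.Gamma s * √π = Real.Gamma (s / 2) * Real.Gamma ((s + 1) / 2) * 2 ^ s / 2 := by
    rw [d]; field_simp
  have z2 : Real.Gamma ((1 - s) / 2) * Real.Gamma ((s + 1) / 2) * cos (s * π / 2) = π := by
    rw [r, div_mul_cancel₀ _ hcos.ne']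
  generalize cos (s * π / 2) = c at *
  field_simp
  linear_combination (2 * Real.Gamma ((1 - s) / 2) * c) * z4
    + (Real.Gamma (s / 2) * 2 ^ s) * z2

lemma abs_cos_rpow (c u : ℝ) (hu : u ∈ Ioo (0 : ℝ) π) : |cos (c - (c + π / 2 + u))| = sin u := by
  rw [show c - (c + π / 2 + u) = -(u + π / 2) by ring, Real.cos_neg, Real.cos_add_pi_div_two,
    abs_neg, abs_of_pos (sin_pos_of_mem_Ioo hu)]

lemma abs_cos_periodic (c : ℝ) : Function.Periodic (fun θ => |cos (c - θ)|) π := fun θ => by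
  simp only
  rw [show c - (θ + π) = c - θ - π by ring, Real.cos_sub_pi, abs_neg]

lemma abs_sub_le_sin {g : ℝ → ℝ} {M : ℝ} (hg : Differentiable ℝ g) (hM : ∀ u, |deriv g u| ≤ M)
    (h : g π = g 0) {u : ℝ} (hu : u ∈ Ioo (0 : ℝ) π) : |g u - g 0| ≤ M * π / 2 * sin u := by
  have lip : ∀ x y, |g x - g y| ≤ M * |x - y| := fun x y =>
    Convex.norm_image_sub_le_of_norm_deriv_le (s := univ) (fun x _ => hg x) (fun x _ => hM x)
      convex_univ trivial trivial
  have hM0 : 0 ≤ M := (abs_nonneg _).trans (hM 0)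
  rcases le_total u (π / 2) with h2 | h2
  · have := Real.mul_le_sin hu.1.le h2
    have l := lip u 0
    rw [sub_zero, abs_of_pos hu.1] at l
    calc _ ≤ M * u := l
      _ = M * π / 2 * (2 / π * u) := by field_simp
      _ ≤ _ := by gcongr
  · have := Real.mul_le_sin (x := π - u) (by linarith [hu.2]) (by linarith)
    rw [Real.sin_pi_sub] at this
    have l := lip u π
    rw [h, abs_sub_comm u, abs_of_pos (sub_pos.2 hu.2)] at l
    calc _ ≤ M * (π - u) := l
      _ = M * π / 2 * (2 / π * (π - u)) := by field_simp
      _ ≤ _ := by gcongr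

/-- Two integrations by parts remove the hypersingular kernel `sin^{s-2}`. -/
lemma integral_sin_by_parts (hs0 : 0 < s) (hs1 : s < 1) {g : ℝ → ℝ} (hg : ContDiff ℝ 2 g)
    (hp : Function.Periodic g π) :
    IntegrableOn (fun u => sin u ^ (-2 + s) * (g u - g 0)) (Ioo 0 π) ∧
    s * (s - 1) * ∫ u in Ioo (0 : ℝ) π, sin u ^ (-2 + s) * (g u - g 0)
      = (∫ u in Ioo (0 : ℝ) π, sin u ^ s * (deriv (deriv g) u + s ^ 2 * g u))
        - s ^ 2 * g 0 * ∫ u in Ioo (0 : ℝ) π, sin u ^ s := by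
  have hd1 : ContDiff ℝ 1 (deriv g) := ContDiff.deriv' (n := 1) (by rwa [one_add_one_eq_two])
  have hc2 : Continuous (deriv (deriv g)) := hd1.continuous_deriv le_rfl
  have hc0 : Continuous g := hg.continuous
  have hc1 : Continuous (deriv g) := hd1.continuous
  have hpd : Function.Periodic (deriv g) π := fun x => by
    rw [← deriv_comp_add_const, show (fun θ => g (θ + π)) = g from funext hp]
  obtain ⟨M, hM⟩ := bounded_of_periodic hc1 hpd
  have hgpi : g π = g 0 := by simpa using hp 0
  have hb : ∀ u ∈ Ioo (0 : ℝ) π, |g u - g 0| ≤ M * π / 2 * sin u := fun u hu =>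
    abs_sub_le_sin (hg.differentiable two_ne_zero) hM hgpi hu
  have hI : IntegrableOn (fun u => sin u ^ (-2 + s) * (g u - g 0)) (Ioo 0 π) := by
    refine Integrable.mono' ((integrableOn_sin_rpow (p := s - 1) (by linarith)).const_mul
      (M * π / 2)) (Measurable.aestronglyMeasurable (by fun_prop))
      (ae_restrict_of_forall_mem measurableSet_Ioo fun u hu => ?_)
    have hs := sin_pos_of_mem_Ioo hu
    rw [norm_mul, Real.norm_of_nonneg (by positivity), Real.norm_eq_abs,
      show s - 1 = -2 + s + 1 by ring, Real.rpow_add_one hs.ne']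
    calc _ ≤ sin u ^ (-2 + s) * (M * π / 2 * sin u) := by gcongr; exact hb u hu
      _ = _ := by ring
  refine ⟨hI, ?_⟩
  have hIs := integrableOn_sin_rpow (p := s) (by linarith)
  have hF : Continuous fun u => deriv (deriv g) u + s ^ 2 * g u := by fun_prop
  have hIF : IntegrableOn (fun u => sin u ^ s * (deriv (deriv g) u + s ^ 2 * g u)) (Ioo 0 π) := by
    have h1 : ContinuousOn (fun u => sin u ^ s * (deriv (deriv g) u + s ^ 2 * g u)) (Icc 0 π) :=
      ContinuousOn.mul (ContinuousOn.rpow_const (by fun_prop) fun v hv => Or.inr (by linarith))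
        hF.continuousOn
    exact h1.integrableOn_Icc.mono_set Ioo_subset_Icc_self
  have hIFs : IntegrableOn (fun u => sin u ^ s * (deriv (deriv g) u + s ^ 2 * g u)
      - s ^ 2 * g 0 * sin u ^ s) (Ioo 0 π) := hIF.sub (hIs.const_mul _)
  have hM0 : 0 ≤ M := (abs_nonneg _).trans (hM 0)
  have hlim : ∀ c : ℝ, sin c = 0 → Tendsto
      (fun u => s * (sin u ^ (s - 1) * cos u * (g u - g 0)) - sin u ^ s * deriv g u)
      (𝓝[Ioo 0 π] c) (𝓝 0) := fun c hc => by
    have h0 : Tendsto (fun u => (s * (M * π / 2) + M) * sin u ^ s) (𝓝[Ioo 0 π] c) (𝓝 0) := by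
      have : Continuous fun u => (s * (M * π / 2) + M) * sin u ^ s :=
        continuous_const.mul (Continuous.rpow_const (by fun_prop) fun x => Or.inr hs0.le)
      have h := this.tendsto c
      rw [hc, Real.zero_rpow hs0.ne', mul_zero] at h
      exact h.mono_left nhdsWithin_le_nhds
    refine squeeze_zero_norm' ?_ h0
    filter_upwards [self_mem_nhdsWithin] with u hu
    have hs := sin_pos_of_mem_Ioo hu
    have e : sin u ^ s = sin u ^ (s - 1) * sin u := by
      rw [← Real.rpow_add_one hs.ne']; congr 1; ring
    have k1 : |sin u ^ (s - 1) * cos u * (g u - g 0)|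
        ≤ sin u ^ (s - 1) * 1 * (M * π / 2 * sin u) := by
      rw [abs_mul, abs_mul, abs_of_pos (Real.rpow_pos_of_pos hs _)]
      gcongr
      · exact Real.abs_cos_le_one u
      · exact hb u hu
    have k2 : |sin u ^ s * deriv g u| ≤ sin u ^ s * M := by
      rw [abs_mul, abs_of_pos (Real.rpow_pos_of_pos hs _)]
      gcongr
      exact hM u
    calc _ ≤ |s * (sin u ^ (s - 1) * cos u * (g u - g 0))| + |sin u ^ s * deriv g u| := abs_sub _ _
      _ ≤ s * (sin u ^ (s - 1) * 1 * (M * π / 2 * sin u)) + sin u ^ s * M := by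
        rw [abs_mul, abs_of_pos hs0]
        gcongr
      _ = _ := by rw [e]; ring
  have key := intervalIntegral.integral_eq_sub_of_hasDerivAt_of_tendsto (a := 0) (b := π)
    (f := fun u => s * (sin u ^ (s - 1) * cos u * (g u - g 0)) - sin u ^ s * deriv g u)
    (f' := fun u => s * (s - 1) * (sin u ^ (-2 + s) * (g u - g 0))
      - (sin u ^ s * (deriv (deriv g) u + s ^ 2 * g u) - s ^ 2 * g 0 * sin u ^ s))
    (fa := 0) (fb := 0) Real.pi_pos ?_ ?_ ?_ ?_
  · rw [sub_self, intervalIntegral.integral_of_le Real.pi_pos.le, integral_Ioc_eq_integral_Ioo,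
      integral_sub (hI.const_mul _) hIFs, integral_const_mul,
      integral_sub hIF (hIs.const_mul _), integral_const_mul] at key
    linear_combination key
  · intro u hu
    have hs := sin_pos_of_mem_Ioo hu
    have h1 := (Real.hasDerivAt_sin u).rpow_const (p := s - 1) (Or.inl hs.ne')
    have h2 := (Real.hasDerivAt_sin u).rpow_const (p := s) (Or.inl hs.ne')
    have h3 := ((hg.differentiable two_ne_zero) u).hasDerivAt
    have h4 := ((hd1.differentiable one_ne_zero) u).hasDerivAt
    refine ((((h1.mul (Real.hasDerivAt_cos u)).mul (h3.sub_const (g 0))).const_mul s).sub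
      (h2.mul h4)).congr_deriv ?_
    have e1 : sin u ^ (s - 1) = sin u ^ (-2 + s) * sin u := by
      rw [← Real.rpow_add_one hs.ne']; congr 1; ring
    have e2 : sin u ^ s = sin u ^ (-2 + s) * sin u ^ 2 := by
      rw [← Real.rpow_natCast, ← Real.rpow_add hs]; congr 1; push_cast; ring
    have e3 : s - 1 - 1 = -2 + s := by ring
    simp only [Pi.mul_apply]
    rw [e3, e1, e2]
    linear_combination (s * (s - 1) * sin u ^ (-2 + s) * (g u - g 0)) * (Real.sin_sq_add_cos_sq u)
  · rw [intervalIntegrable_iff_integrableOn_Ioo_of_le Real.pi_pos.le]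
    exact (hI.const_mul _).sub hIFs
  · rw [← nhdsWithin_Ioo_eq_nhdsGT Real.pi_pos]
    exact hlim 0 Real.sin_zero
  · rw [← nhdsWithin_Ioo_eq_nhdsLT Real.pi_pos]
    exact hlim π Real.sin_pi

/-- The function `s² Ω + Ω''`. -/
def helm (s : ℝ) (Ω : ℝ → ℝ) (θ : ℝ) : ℝ := deriv (deriv Ω) θ + s ^ 2 * Ω θ

lemma continuous_helm (hΩ : ContDiff ℝ 2 Ω) : Continuous (helm s Ω) := by
  have hd1 : ContDiff ℝ 1 (deriv Ω) := ContDiff.deriv' (n := 1) (by rwa [one_add_one_eq_two])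
  have hc2 : Continuous (deriv (deriv Ω)) := hd1.continuous_deriv le_rfl
  have hc0 : Continuous Ω := hΩ.continuous
  unfold helm
  fun_prop

lemma periodic_helm (hp : Function.Periodic Ω π) : Function.Periodic (helm s Ω) π := fun θ => by
  have h1 : Function.Periodic (deriv Ω) π := fun x => by
    rw [← deriv_comp_add_const, show (fun θ => Ω (θ + π)) = Ω from funext hp]
  have h2 : Function.Periodic (deriv (deriv Ω)) π := fun x => by
    rw [← deriv_comp_add_const, show (fun θ => deriv Ω (θ + π)) = deriv Ω from funext h1]
  rw [helm, helm, hp, h2]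

/-- The regularized form of `Ω̃`: correlation of `s² Ω + Ω''` with the locally integrable kernel
`sin^s`. -/
lemma Omt_eq_corr (hs0 : 0 < s) (hs1 : s < 1) (hΩ : ContDiff ℝ 2 Ω) (hp : Function.Periodic Ω π)
    (φ : ℝ) : Omt s Ω φ = 2 * tauC (2 - s) / (s * (s - 1)) *
      corr (fun v => sin v ^ s) (helm s Ω) (φ + π / 2) := by
  set c := φ + π / 2 with hc
  have hg : ContDiff ℝ 2 fun u => Ω (c + u) := hΩ.comp (by fun_prop)
  have hgp : Function.Periodic (fun u => Ω (c + u)) π := fun u => by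
    simp only
    rw [← add_assoc, hp]
  obtain ⟨hI, hparts⟩ := integral_sin_by_parts hs0 hs1 hg hgp
  have hd : ∀ u, deriv (deriv fun u => Ω (c + u)) u = deriv (deriv Ω) (c + u) := fun u => by
    have h : (deriv fun u => Ω (c + u)) = fun u => deriv Ω (c + u) :=
      funext fun x => deriv_comp_const_add _ c x
    rw [h]
    exact deriv_comp_const_add _ c u
  simp only [hd, add_zero] at hparts hI
  have e : EqOn (fun u => |cos (φ - (c + u))| ^ (-2 + s) * (Ω (c + u) - Ω c))
      (fun u => sin u ^ (-2 + s) * (Ω (c + u) - Ω c)) (Ioo 0 π) := fun u hu => by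
    simp only
    rw [abs_cos_rpow φ u hu]
  have h2 := integral_two_periods (H := fun θ => |cos (φ - θ)| ^ (-2 + s) * (Ω θ - Ω c))
    (fun θ => by
      have := abs_cos_periodic φ θ
      simp only at this ⊢
      rw [this, hp]) c (hI.congr_fun e.symm measurableSet_Ioo)
  rw [setIntegral_congr_fun measurableSet_Ioo e] at h2
  rw [Omt, ← hc, h2, cC_eq hs0 hs1]
  have z : s - 1 ≠ 0 := by linarith
  change _ = _ * ∫ u in Ioo (0 : ℝ) π, sin u ^ s * (deriv (deriv Ω) (c + u) + s ^ 2 * Ω (c + u))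
  field_simp
  linear_combination tauC (2 - s) * hparts

lemma continuous_Omt (hs0 : 0 < s) (hs1 : s < 1) (hΩ : ContDiff ℝ 2 Ω)
    (hp : Function.Periodic Ω π) : Continuous (Omt s Ω) := by
  rw [show Omt s Ω = _ from funext fun φ => Omt_eq_corr hs0 hs1 hΩ hp φ]
  have := continuous_corr (k := fun v => sin v ^ s) (integrableOn_sin_rpow (by linarith))
    (continuous_helm (s := s) hΩ) (periodic_helm hp)
  fun_prop

lemma periodic_Omt (hs0 : 0 < s) (hs1 : s < 1) (hΩ : ContDiff ℝ 2 Ω)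
    (hp : Function.Periodic Ω π) : Function.Periodic (Omt s Ω) π := fun φ => by
  rw [Omt_eq_corr hs0 hs1 hΩ hp, Omt_eq_corr hs0 hs1 hΩ hp, add_right_comm,
    periodic_corr (periodic_helm hp)]

lemma even_Omt (hp : Function.Periodic Ω π) (hsymm : ∀ θ, Ω (-θ) = Ω θ) (φ : ℝ) :
    Omt s Ω (-φ) = Omt s Ω φ := by
  have h1 : Ω (-φ + π / 2) = Ω (φ + π / 2) := by
    rw [← hsymm, ← hp]; congr 1; ring
  have h2 := intervalIntegral.integral_comp_neg
    (fun θ => |cos (-φ - θ)| ^ (-2 + s) * (Ω θ - Ω (φ + π / 2))) (a := -π) (b := π)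
  rw [neg_neg] at h2
  rw [Omt, Omt, h1, ← h2]
  congr 3
  ext θ
  rw [hsymm, show -φ - -θ = -(φ - θ) by ring, Real.cos_neg]

/-- **Inversion formula.** `Ω` is recovered from `Ω̃` by the kernel `|cos|^{-s}`; both sides have the
same Fourier coefficients by `sinMul_mul`. -/
lemma inversion (hs0 : 0 < s) (hs1 : s < 1) (hΩ : ContDiff ℝ 2 Ω) (hp : Function.Periodic Ω π)
    (θ : ℝ) : tauC s * ∫ φ in (-π)..π, |cos (θ - φ)| ^ (-s) * Omt s Ω φ = Ω θ := by
  have hk1 := integrableOn_sin_rpow (p := -s) (by linarith)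
  have hk2 := integrableOn_sin_rpow (p := s) (by linarith)
  have hG1 := continuous_helm (s := s) hΩ
  have hG2 := periodic_helm (s := s) hp
  have hK1 := continuous_corr hk2 hG1 hG2
  have hK2 := periodic_corr (k := fun v => sin v ^ s) hG2
  have hOc := continuous_Omt hs0 hs1 hΩ hp
  have hOp := periodic_Omt hs0 hs1 hΩ hp
  obtain ⟨C, hC⟩ := bounded_of_periodic hOc hOp
  set κ := 2 * tauC (2 - s) / (s * (s - 1)) with hκ
  have hI : IntegrableOn (fun u => sin u ^ (-s) * Omt s Ω (θ + π / 2 + u)) (Ioo 0 π) :=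
    Integrable.mul_bdd (c := C) hk1 (Continuous.aestronglyMeasurable (by fun_prop))
      (ae_of_all _ fun u => hC _)
  have e : EqOn (fun u => |cos (θ - (θ + π / 2 + u))| ^ (-s) * Omt s Ω (θ + π / 2 + u))
      (fun u => sin u ^ (-s) * Omt s Ω (θ + π / 2 + u)) (Ioo 0 π) := fun u hu => by
    simp only
    rw [abs_cos_rpow θ u hu]
  rw [integral_two_periods (fun φ => by
      have := abs_cos_periodic θ φ
      simp only at this ⊢
      rw [this, hOp]) (θ + π / 2) (hI.congr_fun e.symm measurableSet_Ioo),
    setIntegral_congr_fun measurableSet_Ioo e]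
  have e2 : ∫ u in Ioo (0 : ℝ) π, sin u ^ (-s) * Omt s Ω (θ + π / 2 + u)
      = κ * corr (fun v => sin v ^ (-s)) (corr (fun v => sin v ^ s) (helm s Ω)) θ := by
    rw [← periodic_corr hK2, corr, ← integral_const_mul]
    refine integral_congr_ae (ae_of_all _ fun u => ?_)
    simp only
    rw [Omt_eq_corr hs0 hs1 hΩ hp, show θ + π / 2 + u + π / 2 = θ + π + u by ring]
    ring
  rw [e2]
  have hc1 := continuous_corr hk1 hK1 hK2
  have key : (fun θ => tauC s * (2 * (κ * corr (fun v => sin v ^ (-s))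
      (corr (fun v => sin v ^ s) (helm s Ω)) θ))) = Ω := by
    refine eq_of_fc_eq (by fun_prop) hΩ.continuous (fun θ => ?_) hp fun n => ?_
    · rw [periodic_corr hK2]
    have h1 := fc_corr hk1 hK1 hK2 n
    have h2 := fc_corr hk2 hG1 hG2 n
    have h3 : fc (helm s Ω) n = (s ^ 2 - 4 * n ^ 2) * fc Ω n := fc_deriv2 hΩ hp s n
    have h4 := sinMul_mul hs0 hs1 n
    have h5 : fc (fun θ => tauC s * (2 * (κ * corr (fun v => sin v ^ (-s))
        (corr (fun v => sin v ^ s) (helm s Ω)) θ))) n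
        = tauC s * (2 * κ) * fc (corr (fun v => sin v ^ (-s))
          (corr (fun v => sin v ^ s) (helm s Ω))) n := by
      rw [fc, fc, ← intervalIntegral.integral_const_mul]
      congr 1
      ext θ
      push_cast
      ring
    have h6 : tauC s * (2 * κ) * (s ^ 2 * (∫ v in Ioo (0 : ℝ) π, sin v ^ (-s)) *
        ∫ v in Ioo (0 : ℝ) π, sin v ^ s) = 1 := by
      rw [← const_inversion hs0 hs1, cC_eq hs0 hs1, hκ]
      have z : s - 1 ≠ 0 := by linarith
      field_simp
    have h6' : (tauC s : ℂ) * (2 * κ) * (s ^ 2 * sinMul (-s) 0 * sinMul s 0) = 1 := by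
      rw [sinMul_zero, sinMul_zero]
      exact_mod_cast h6
    rw [h5, h1, h2, h3]
    change _ * (sinMul (-s) n * (sinMul s n * _)) = _
    linear_combination (tauC s * (2 * κ) * fc Ω n) * h4 + fc Ω n * h6'
  exact congrFun key θ

lemma nrm_nonneg (x : ℝ × ℝ) : 0 ≤ nrm x := Real.sqrt_nonneg _

lemma eq_nrm_mul (x : ℝ × ℝ) : x.1 = nrm x * cos (ang x) ∧ x.2 = nrm x * sin (ang x) := by
  have hn : ‖(⟨x.1, x.2⟩ : ℂ)‖ = nrm x := by
    rw [Complex.norm_def, Complex.normSq_mk, nrm, sq, sq]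
  have h1 := Complex.norm_mul_cos_arg ⟨x.1, x.2⟩
  have h2 := Complex.norm_mul_sin_arg ⟨x.1, x.2⟩
  rw [hn] at h1 h2
  unfold ang
  split_ifs with h
  · rw [h] at h1 h2
    rw [Real.cos_neg, Real.sin_neg]
    simp only [Real.cos_pi, Real.sin_pi] at h1 h2 ⊢
    exact ⟨h1.symm, by rw [← h2]; simp⟩
  · exact ⟨h1.symm, h2.symm⟩

/-- The singular part of the interaction potential is a superposition of one-dimensional Riesz
kernels. At the origin both sides vanish because `0 ^ (-s) = 0`. -/
lemma kernel_eq (hs0 : 0 < s) (hs1 : s < 1) (hΩ : ContDiff ℝ 2 Ω) (hp : Function.Periodic Ω π)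
    (x : ℝ × ℝ) : nrm x ^ (-s) * Ω (ang x)
      = tauC s * ∫ φ in (-π)..π, |x.1 * cos φ + x.2 * sin φ| ^ (-s) * Omt s Ω φ := by
  obtain ⟨h1, h2⟩ := eq_nrm_mul x
  have e : ∀ φ, |x.1 * cos φ + x.2 * sin φ| ^ (-s) * Omt s Ω φ
      = nrm x ^ (-s) * (|cos (ang x - φ)| ^ (-s) * Omt s Ω φ) := fun φ => by
    have h3 : nrm x * |cos (ang x - φ)| = |nrm x * cos (ang x - φ)| := by
      rw [abs_mul, abs_of_nonneg (nrm_nonneg x)]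
    rw [← mul_assoc, ← Real.mul_rpow (nrm_nonneg x) (abs_nonneg _), h3, Real.cos_sub]
    congr 3
    linear_combination cos φ * h1 + sin φ * h2
  simp only [e]
  rw [intervalIntegral.integral_const_mul, ← inversion hs0 hs1 hΩ hp (ang x)]
  ring

end Inversion

/-! ### The potential generated by the elliptical measure -/

section Gradient

variable {s a b : ℝ} {Ω : ℝ → ℝ}

lemma rhoAB_eq (s a b : ℝ) :
    rhoAB s a b = Measure.map (fun z : ℝ × ℝ => (a * z.1, b * z.2)) (rho2meas s) := by
  unfold rhoAB rhoE Rot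
  simp

lemma integral_rhoAB (s a b : ℝ) {f : ℝ × ℝ → ℝ} (hf : Measurable f) :
    ∫ y, f y ∂(rhoAB s a b) = ∫ z, f (a * z.1, b * z.2) ∂(rho2meas s) := by
  rw [rhoAB_eq, integral_map (by fun_prop) hf.aestronglyMeasurable]

lemma quad_pos (ha : 0 < a) (hb : 0 < b) (φ : ℝ) :
    0 < a ^ 2 * cos φ ^ 2 + b ^ 2 * sin φ ^ 2 := by
  have h := sin_sq_add_cos_sq φ
  by_cases hc : cos φ = 0
  · rw [hc] at h ⊢
    have : sin φ ^ 2 = 1 := by linarith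
    rw [this]
    positivity
  · positivity

/-- On every line, an interior point of the ellipse projects into the interior of the projection
of the ellipse. -/
lemma sq_lt_of_mem {R : ℝ} (ha : 0 < a) (hb : 0 < b) {x : ℝ × ℝ}
    (hx : x.1 ^ 2 / a ^ 2 + x.2 ^ 2 / b ^ 2 < R) (φ : ℝ) :
    (x.1 * cos φ + x.2 * sin φ) ^ 2 < (a ^ 2 * cos φ ^ 2 + b ^ 2 * sin φ ^ 2) * R := by
  have hQ := quad_pos ha hb φ
  refine lt_of_le_of_lt ?_ (mul_lt_mul_of_pos_left hx hQ)
  have h : (a ^ 2 * cos φ ^ 2 + b ^ 2 * sin φ ^ 2) * (x.1 ^ 2 / a ^ 2 + x.2 ^ 2 / b ^ 2)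
      - (x.1 * cos φ + x.2 * sin φ) ^ 2 = (b * sin φ * (x.1 / a) - a * cos φ * (x.2 / b)) ^ 2 := by
    field_simp
    ring
  nlinarith [sq_nonneg (b * sin φ * (x.1 / a) - a * cos φ * (x.2 / b))]

lemma integral_kernel_pos (hs0 : 0 < s) (hs1 : s < 1) {p q c : ℝ} (hQ : 0 < p ^ 2 + q ^ 2)
    (hc : c ^ 2 < (p ^ 2 + q ^ 2) * R2 s ^ 2) :
    0 < ∫ z, |c - (p * z.1 + q * z.2)| ^ (-s) ∂(rho2meas s) := by
  rw [integral_rpow_linear hs0 hs1 hQ hc]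
  have h1 := R1_pos hs0 hs1
  have h2 := R2_pos hs0 hs1
  refine mul_pos (by positivity) ?_
  have e : (p ^ 2 + q ^ 2) ^ (-s / 2) = (p ^ 2 + q ^ 2) ^ (-(2 + s) / 2) * (p ^ 2 + q ^ 2) := by
    rw [← Real.rpow_add_one hQ.ne']
    congr 1
    ring
  have h3 : 0 < (p ^ 2 + q ^ 2) ^ (-(2 + s) / 2) := by positivity
  have h4 : R2 s ^ 2 ≤ R2 s ^ 2 / s := by
    rw [le_div_iff₀ hs0]
    nlinarith [sq_nonneg (R2 s)]
  rw [e, mul_assoc, mul_div_assoc, ← mul_sub]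
  refine mul_pos h3 ?_
  rw [mul_div_assoc]
  nlinarith

lemma integrable_kernel (hs0 : 0 < s) (hs1 : s < 1) {p q c : ℝ} (hQ : 0 < p ^ 2 + q ^ 2)
    (hc : c ^ 2 < (p ^ 2 + q ^ 2) * R2 s ^ 2) :
    Integrable (fun z : ℝ × ℝ => |c - (p * z.1 + q * z.2)| ^ (-s)) (rho2meas s) := by
  by_contra h
  exact (integral_kernel_pos hs0 hs1 hQ hc).ne' (integral_undef h)

lemma continuous_quad_rpow (ha : 0 < a) (hb : 0 < b) (p : ℝ) :
    Continuous fun φ => (a ^ 2 * cos φ ^ 2 + b ^ 2 * sin φ ^ 2) ^ p :=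
  Continuous.rpow_const (by fun_prop) fun φ => Or.inl (quad_pos ha hb φ).ne'

/-- By Fubini and the superposition formula `kernel_eq`, the singular part of the potential of
`ρ_{a,b}` is an average over directions of one-dimensional potentials, each quadratic. -/
lemma singular_potential (hs0 : 0 < s) (hs1 : s < 1) (hΩ : ContDiff ℝ 2 Ω)
    (hp : Function.Periodic Ω π) (ha : 0 < a) (hb : 0 < b) {x : ℝ × ℝ}
    (hx : x.1 ^ 2 / a ^ 2 + x.2 ^ 2 / b ^ 2 < R2 s ^ 2) :
    Integrable (fun z : ℝ × ℝ => nrm (x - (a * z.1, b * z.2)) ^ (-s) *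
      Ω (ang (x - (a * z.1, b * z.2)))) (rho2meas s) ∧
    ∫ z, nrm (x - (a * z.1, b * z.2)) ^ (-s) * Ω (ang (x - (a * z.1, b * z.2))) ∂(rho2meas s)
      = tauC s * ∫ φ in (-π)..π, (R1 s / R2 s) ^ (2 + s) *
        ((a ^ 2 * cos φ ^ 2 + b ^ 2 * sin φ ^ 2) ^ (-s / 2) * R2 s ^ 2 / s
          - (a ^ 2 * cos φ ^ 2 + b ^ 2 * sin φ ^ 2) ^ (-(2 + s) / 2)
            * (x.1 * cos φ + x.2 * sin φ) ^ 2) * Omt s Ω φ := by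
  have hO := continuous_Omt hs0 hs1 hΩ hp
  have : IsProbabilityMeasure (rho2meas s) := isProbabilityMeasure_rho2 hs0 hs1
  have hpi : -π ≤ π := by linarith [pi_pos]
  have hQe : ∀ φ, (a * cos φ) ^ 2 + (b * sin φ) ^ 2 = a ^ 2 * cos φ ^ 2 + b ^ 2 * sin φ ^ 2 :=
    fun φ => by ring
  have hQ : ∀ φ, 0 < (a * cos φ) ^ 2 + (b * sin φ) ^ 2 := fun φ => by
    rw [hQe]; exact quad_pos ha hb φ
  have hc : ∀ φ, (x.1 * cos φ + x.2 * sin φ) ^ 2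
      < ((a * cos φ) ^ 2 + (b * sin φ) ^ 2) * R2 s ^ 2 := fun φ => by
    rw [hQe]; exact sq_lt_of_mem ha hb hx φ
  set F : (ℝ × ℝ) → ℝ → ℝ := fun z φ => |x.1 * cos φ + x.2 * sin φ
      - (a * cos φ * z.1 + b * sin φ * z.2)| ^ (-s) * Omt s Ω φ with hF
  set ν : Measure ℝ := volume.restrict (Ioc (-π) π)
  have hFm : Measurable (Function.uncurry F) := by
    have := hO.measurable
    unfold Function.uncurry
    simp only [hF]
    fun_prop
  have hslice : ∀ φ, Integrable (fun z => F z φ) (rho2meas s) := fun φ =>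
    (integrable_kernel hs0 hs1 (hQ φ) (hc φ)).mul_const _
  have hint : ∀ φ, ∫ z, |x.1 * cos φ + x.2 * sin φ
      - (a * cos φ * z.1 + b * sin φ * z.2)| ^ (-s) ∂(rho2meas s) = (R1 s / R2 s) ^ (2 + s) *
        ((a ^ 2 * cos φ ^ 2 + b ^ 2 * sin φ ^ 2) ^ (-s / 2) * R2 s ^ 2 / s
          - (a ^ 2 * cos φ ^ 2 + b ^ 2 * sin φ ^ 2) ^ (-(2 + s) / 2)
            * (x.1 * cos φ + x.2 * sin φ) ^ 2) := fun φ => by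
    rw [integral_rpow_linear hs0 hs1 (hQ φ) (hc φ), hQe]
  have hFi : Integrable (Function.uncurry F) ((rho2meas s).prod ν) := by
    rw [integrable_prod_iff' hFm.aestronglyMeasurable]
    refine ⟨ae_of_all _ hslice, ?_⟩
    have e : (fun φ => ∫ z, ‖Function.uncurry F (z, φ)‖ ∂(rho2meas s)) = fun φ =>
        (R1 s / R2 s) ^ (2 + s) *
        ((a ^ 2 * cos φ ^ 2 + b ^ 2 * sin φ ^ 2) ^ (-s / 2) * R2 s ^ 2 / s
          - (a ^ 2 * cos φ ^ 2 + b ^ 2 * sin φ ^ 2) ^ (-(2 + s) / 2)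
            * (x.1 * cos φ + x.2 * sin φ) ^ 2) * |Omt s Ω φ| := funext fun φ => by
      rw [← hint, ← integral_mul_const]
      congr 1
      ext z
      rw [Function.uncurry, hF, norm_mul, Real.norm_eq_abs, Real.norm_eq_abs,
        abs_of_nonneg (Real.rpow_nonneg (abs_nonneg _) _)]
    rw [e]
    have h1 := continuous_quad_rpow ha hb (-s / 2)
    have h2 := continuous_quad_rpow ha hb (-(2 + s) / 2)
    exact Continuous.integrableOn_Ioc (by fun_prop)
  have hk : ∀ z : ℝ × ℝ, nrm (x - (a * z.1, b * z.2)) ^ (-s) * Ω (ang (x - (a * z.1, b * z.2)))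
      = tauC s * ∫ φ, F z φ ∂ν := fun z => by
    rw [kernel_eq hs0 hs1 hΩ hp, intervalIntegral.integral_of_le hpi]
    congr 2
    ext φ
    simp only [hF, Prod.fst_sub, Prod.snd_sub]
    congr 3
    ring
  simp only [hk]
  refine ⟨hFi.integral_prod_left.const_mul _, ?_⟩
  rw [integral_const_mul, integral_integral_swap hFi, intervalIntegral.integral_of_le hpi]
  congr 2
  ext φ
  rw [← hint, ← integral_mul_const]

lemma Dcoef_eq_zero (hp : Function.Periodic Ω π) (hsymm : ∀ θ, Ω (-θ) = Ω θ) :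
    ∫ φ in (-π)..π, (a ^ 2 * cos φ ^ 2 + b ^ 2 * sin φ ^ 2) ^ (-(2 + s) / 2) *
        (cos φ * sin φ) * Omt s Ω φ = 0 := by
  have h := intervalIntegral.integral_comp_neg (fun φ =>
    (a ^ 2 * cos φ ^ 2 + b ^ 2 * sin φ ^ 2) ^ (-(2 + s) / 2) *
        (cos φ * sin φ) * Omt s Ω φ) (a := -π) (b := π)
  simp only [neg_neg, Real.cos_neg, Real.sin_neg, neg_sq, mul_neg, neg_mul, even_Omt hp hsymm,
    intervalIntegral.integral_neg] at h
  linarith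

lemma quadratic_potential (hs0 : 0 < s) (hs1 : s < 1) (x : ℝ × ℝ) :
    Integrable (fun z : ℝ × ℝ => nrm (x - (a * z.1, b * z.2)) ^ 2) (rho2meas s) ∧
    ∫ z : ℝ × ℝ, nrm (x - (a * z.1, b * z.2)) ^ 2 ∂(rho2meas s)
      = x.1 ^ 2 + x.2 ^ 2 + ∫ z : ℝ × ℝ, ((a * z.1) ^ 2 + (b * z.2) ^ 2) ∂(rho2meas s) := by
  have : IsProbabilityMeasure (rho2meas s) := isProbabilityMeasure_rho2 hs0 hs1
  have e : (fun z : ℝ × ℝ => nrm (x - (a * z.1, b * z.2)) ^ 2) = fun z =>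
      (x.1 ^ 2 + x.2 ^ 2) - 2 * x.1 * a * z.1 - 2 * x.2 * b * z.2
        + ((a * z.1) ^ 2 + (b * z.2) ^ 2) := funext fun z => by
    rw [nrm_sq]
    simp only [Prod.fst_sub, Prod.snd_sub]
    ring
  have i0 : Integrable (fun z : ℝ × ℝ => x.1 ^ 2 + x.2 ^ 2) (rho2meas s) := integrable_const _
  have i1 : Integrable (fun z : ℝ × ℝ => 2 * x.1 * a * z.1) (rho2meas s) :=
    integrable_rho2_of_continuous hs0 hs1 (by fun_prop)
  have i2 : Integrable (fun z : ℝ × ℝ => 2 * x.2 * b * z.2) (rho2meas s) :=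
    integrable_rho2_of_continuous hs0 hs1 (by fun_prop)
  have i3 : Integrable (fun z : ℝ × ℝ => (a * z.1) ^ 2 + (b * z.2) ^ 2) (rho2meas s) :=
    integrable_rho2_of_continuous hs0 hs1 (by fun_prop)
  have m1 := integral_mean_rho2 hs0 hs1 (p := 1) (q := 0) (by norm_num)
  have m2 := integral_mean_rho2 hs0 hs1 (p := 0) (q := 1) (by norm_num)
  simp only [one_mul, zero_mul, add_zero, zero_add] at m1 m2
  refine ⟨integrable_rho2_of_continuous hs0 hs1 (by rw [e]; fun_prop), ?_⟩
  have i12 : Integrable (fun z : ℝ × ℝ => x.1 ^ 2 + x.2 ^ 2 - 2 * x.1 * a * z.1 - 2 * x.2 * b * z.2)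
      (rho2meas s) := (i0.sub i1).sub i2
  have i11 : Integrable (fun z : ℝ × ℝ => x.1 ^ 2 + x.2 ^ 2 - 2 * x.1 * a * z.1)
      (rho2meas s) := i0.sub i1
  rw [e, integral_add i12 i3, integral_sub i11 i2, integral_sub i0 i1,
    integral_const_mul, integral_const_mul, m1, m2]
  simp

/-- Inside the ellipse, the potential generated by `ρ_{a,b}` is an explicit quadratic
polynomial. -/
lemma potential_eq (hs0 : 0 < s) (hs1 : s < 1) (hΩ : ContDiff ℝ 2 Ω)
    (hp : Function.Periodic Ω π) (hsymm : ∀ θ, Ω (-θ) = Ω θ) (ha : 0 < a) (hb : 0 < b) :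
    ∃ c : ℝ, ∀ x : ℝ × ℝ, x.1 ^ 2 / a ^ 2 + x.2 ^ 2 / b ^ 2 < R2 s ^ 2 →
      ∫ y, Wr s Ω (x - y) ∂(rhoAB s a b)
        = c + (1 - Acoef s Ω a b) * x.1 ^ 2 + (1 - Bcoef s Ω a b) * x.2 ^ 2 := by
  have hO := continuous_Omt hs0 hs1 hΩ hp
  have h1 := continuous_quad_rpow ha hb (-s / 2)
  have h2 := continuous_quad_rpow ha hb (-(2 + s) / 2)
  refine ⟨tauC s * (R1 s / R2 s) ^ (2 + s) * (R2 s ^ 2 / s) *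
      (∫ φ in (-π)..π, (a ^ 2 * cos φ ^ 2 + b ^ 2 * sin φ ^ 2) ^ (-s / 2) * Omt s Ω φ)
      + ∫ z : ℝ × ℝ, ((a * z.1) ^ 2 + (b * z.2) ^ 2) ∂(rho2meas s), fun x hx => ?_⟩
  have hm : Measurable fun y => Wr s Ω (x - y) := by
    have h3 : Measurable ang := by
      unfold ang
      have hcm : Measurable fun x : ℝ × ℝ => Complex.arg ⟨x.1, x.2⟩ :=
        Complex.measurable_arg.comp
          (Complex.measurableEquivRealProd.symm.measurable.comp measurable_id)
      exact Measurable.ite (hcm (measurableSet_singleton π)) measurable_const hcm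
    have h4 : Measurable nrm := by unfold nrm; fun_prop
    have h5 : Measurable Ω := hΩ.continuous.measurable
    unfold Wr
    fun_prop
  obtain ⟨hi1, he1⟩ := singular_potential hs0 hs1 hΩ hp ha hb hx
  obtain ⟨hi2, he2⟩ := quadratic_potential (a := a) (b := b) hs0 hs1 x
  rw [integral_rhoAB s a b hm]
  simp only [Wr]
  rw [integral_add hi1 hi2, he1, he2]
  have e : (fun φ => (R1 s / R2 s) ^ (2 + s) *
        ((a ^ 2 * cos φ ^ 2 + b ^ 2 * sin φ ^ 2) ^ (-s / 2) * R2 s ^ 2 / s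
          - (a ^ 2 * cos φ ^ 2 + b ^ 2 * sin φ ^ 2) ^ (-(2 + s) / 2)
            * (x.1 * cos φ + x.2 * sin φ) ^ 2) * Omt s Ω φ) = fun φ =>
      (R1 s / R2 s) ^ (2 + s) * (R2 s ^ 2 / s) *
        ((a ^ 2 * cos φ ^ 2 + b ^ 2 * sin φ ^ 2) ^ (-s / 2) * Omt s Ω φ)
      - (R1 s / R2 s) ^ (2 + s) * x.1 ^ 2 *
        ((a ^ 2 * cos φ ^ 2 + b ^ 2 * sin φ ^ 2) ^ (-(2 + s) / 2) * cos φ ^ 2 * Omt s Ω φ)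
      - (R1 s / R2 s) ^ (2 + s) * (2 * x.1 * x.2) *
        ((a ^ 2 * cos φ ^ 2 + b ^ 2 * sin φ ^ 2) ^ (-(2 + s) / 2) * (cos φ * sin φ) * Omt s Ω φ)
      - (R1 s / R2 s) ^ (2 + s) * x.2 ^ 2 *
        ((a ^ 2 * cos φ ^ 2 + b ^ 2 * sin φ ^ 2) ^ (-(2 + s) / 2) * sin φ ^ 2 * Omt s Ω φ) :=
    funext fun φ => by ring
  rw [e, intervalIntegral.integral_sub (Continuous.intervalIntegrable (by fun_prop) _ _)
      (Continuous.intervalIntegrable (by fun_prop) _ _),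
    intervalIntegral.integral_sub (Continuous.intervalIntegrable (by fun_prop) _ _)
      (Continuous.intervalIntegrable (by fun_prop) _ _),
    intervalIntegral.integral_sub (Continuous.intervalIntegrable (by fun_prop) _ _)
      (Continuous.intervalIntegrable (by fun_prop) _ _),
    intervalIntegral.integral_const_mul, intervalIntegral.integral_const_mul,
    intervalIntegral.integral_const_mul, intervalIntegral.integral_const_mul,
    Dcoef_eq_zero hp hsymm, Acoef, Bcoef]
  ring

lemma msupport_subset (hs0 : 0 < s) (ha : 0 < a) (hb : 0 < b) :
    msupport (rhoAB s a b) ⊆ {x | x.1 ^ 2 / a ^ 2 + x.2 ^ 2 / b ^ 2 ≤ R2 s ^ 2} := by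
  intro x hx
  by_contra hn
  simp only [mem_ofPred_eq, not_le] at hn
  have hopen : IsOpen {y : ℝ × ℝ | R2 s ^ 2 < y.1 ^ 2 / a ^ 2 + y.2 ^ 2 / b ^ 2} :=
    isOpen_lt (by fun_prop) (by fun_prop)
  refine (hx _ (hopen.mem_nhds hn)).ne' ?_
  rw [rhoAB_eq, Measure.map_apply (by fun_prop) hopen.measurableSet]
  refine measure_mono_null (fun z hz => ?_) (ae_iff.1 (ae_rho2 hs0))
  simp only [mem_preimage, mem_ofPred_eq, not_lt] at hz ⊢
  have e : (a * z.1) ^ 2 / a ^ 2 + (b * z.2) ^ 2 / b ^ 2 = z.1 ^ 2 + z.2 ^ 2 := by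
    field_simp
  linarith

lemma interior_msupport_subset (hs0 : 0 < s) (hs1 : s < 1) (ha : 0 < a) (hb : 0 < b) :
    interior (msupport (rhoAB s a b)) ⊆
      {x | x.1 ^ 2 / a ^ 2 + x.2 ^ 2 / b ^ 2 < R2 s ^ 2} := by
  intro x hx
  have hR : 0 < R2 s ^ 2 := by have := R2_pos hs0 hs1; positivity
  have hnh : ∀ᶠ t : ℝ in 𝓝 1, t • x ∈ msupport (rhoAB s a b) := by
    have hc : ContinuousAt (fun t : ℝ => t • x) 1 := by fun_prop
    exact hc.eventually_mem (by rw [one_smul]; exact mem_interior_iff_mem_nhds.1 hx)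
  -- Dilating `x` slightly stays in the closed ellipse.
  obtain ⟨t, ht, ht1⟩ := ((hnh.filter_mono nhdsWithin_le_nhds).and
    (self_mem_nhdsWithin : ∀ᶠ t : ℝ in 𝓝[>] 1, t ∈ Ioi 1)).exists
  have h := msupport_subset hs0 ha hb ht
  simp only [mem_ofPred_eq, Prod.smul_fst, Prod.smul_snd, smul_eq_mul] at h ht1 ⊢
  have e : (t * x.1) ^ 2 / a ^ 2 + (t * x.2) ^ 2 / b ^ 2
      = t ^ 2 * (x.1 ^ 2 / a ^ 2 + x.2 ^ 2 / b ^ 2) := by ring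
  rw [e] at h
  by_contra! hn
  have h1 : 1 < t ^ 2 := by nlinarith
  nlinarith [mul_le_mul_of_nonneg_left hn (sq_nonneg t)]

lemma hasFDerivAt_potential (hs0 : 0 < s) (hs1 : s < 1) (hΩ : ContDiff ℝ 2 Ω)
    (hp : Function.Periodic Ω π) (hsymm : ∀ θ, Ω (-θ) = Ω θ) (ha : 0 < a) (hb : 0 < b)
    {x : ℝ × ℝ} (hx : x ∈ interior (msupport (rhoAB s a b))) :
    HasFDerivAt (fun z : ℝ × ℝ => ∫ y, Wr s Ω (z - y) ∂(rhoAB s a b))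
      ((2 * (1 - Acoef s Ω a b) * x.1) • ContinuousLinearMap.fst ℝ ℝ ℝ +
        (2 * (1 - Bcoef s Ω a b) * x.2) • ContinuousLinearMap.snd ℝ ℝ ℝ) x := by
  obtain ⟨c, hc⟩ := potential_eq hs0 hs1 hΩ hp hsymm ha hb
  have hopen : IsOpen {y : ℝ × ℝ | y.1 ^ 2 / a ^ 2 + y.2 ^ 2 / b ^ 2 < R2 s ^ 2} :=
    isOpen_lt (by fun_prop) (by fun_prop)
  have hev := hopen.mem_nhds (interior_msupport_subset hs0 hs1 ha hb hx)
  refine HasFDerivAt.congr_of_eventuallyEq ?_ (eventually_of_mem hev hc)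
  have h1 : HasFDerivAt (fun z : ℝ × ℝ => z.1) (ContinuousLinearMap.fst ℝ ℝ ℝ) x := hasFDerivAt_fst
  have h2 : HasFDerivAt (fun z : ℝ × ℝ => z.2) (ContinuousLinearMap.snd ℝ ℝ ℝ) x := hasFDerivAt_snd
  refine ((((h1.pow 2).const_mul (1 - Acoef s Ω a b)).const_add c).add
    ((h2.pow 2).const_mul (1 - Bcoef s Ω a b))).congr_fderiv ?_
  ext <;> simp <;> ring

end Gradient

/-! ### Moving the half-axes -/

section Continuity

variable {s : ℝ}

/-- Differentiation of `∫ f dρ_{a,b}` in the half-axes: under the pushforward, moving the half-axes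
with velocities `a'`, `b'` transports the mass with the linear velocity field
`(a' z₁, b' z₂)`. -/
lemma hasDerivWithinAt_integral (hs0 : 0 < s) (hs1 : s < 1) {f : ℝ × ℝ → ℝ}
    (hf : ContDiff ℝ (⊤ : ℕ∞) f) (hsupp : HasCompactSupport f) {a b : ℝ → ℝ} {a' b' t : ℝ}
    {S : Set ℝ} (ha : HasDerivWithinAt a a' S t) (hb : HasDerivWithinAt b b' S t) :
    HasDerivWithinAt (fun τ => ∫ x, f x ∂(rhoAB s (a τ) (b τ)))
      (∫ z, fderiv ℝ f (a t * z.1, b t * z.2) (a' * z.1, b' * z.2) ∂(rho2meas s)) S t := by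
  have hfd : Differentiable ℝ f := hf.differentiable (by simp)
  have hfc : Continuous (fderiv ℝ f) := hf.continuous_fderiv (by simp)
  obtain ⟨C, hC⟩ := (hsupp.fderiv (𝕜 := ℝ)).exists_bound_of_continuous hfc
  have hfm : Measurable f := hf.continuous.measurable
  simp only [integral_rhoAB s _ _ hfm]
  -- `L z` is the linear map `(α, β) ↦ (α z₁, β z₂)`.
  set L : ℝ × ℝ → (ℝ × ℝ →L[ℝ] ℝ × ℝ) := fun z =>
    (z.1 • ContinuousLinearMap.fst ℝ ℝ ℝ).prod (z.2 • ContinuousLinearMap.snd ℝ ℝ ℝ) with hL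
  have hLe : ∀ z w, L z w = (w.1 * z.1, w.2 * z.2) := fun z w => by
    simp [hL, mul_comm]
  have hLc : Continuous L := by
    have : L = fun z => z.1 • (ContinuousLinearMap.inl ℝ ℝ ℝ).comp (ContinuousLinearMap.fst ℝ ℝ ℝ)
        + z.2 • (ContinuousLinearMap.inr ℝ ℝ ℝ).comp (ContinuousLinearMap.snd ℝ ℝ ℝ) := by
      ext z <;> simp [hL]
    rw [this]
    fun_prop
  set w₀ : ℝ × ℝ := (a t, b t)
  have hD : ∀ z w, HasFDerivAt (fun w => f (L z w)) ((fderiv ℝ f (L z w)).comp (L z)) w :=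
    fun z w => (hfd _).hasFDerivAt.comp w (L z).hasFDerivAt
  have hc2 : Continuous fun z => (fderiv ℝ f (L z w₀)).comp (L z) := by
    have h1 : Continuous fun z => L z w₀ := by simp only [hLe]; fun_prop
    exact (hfc.comp h1).clm_comp hLc
  have hI : Integrable (fun z => (fderiv ℝ f (L z w₀)).comp (L z)) (rho2meas s) := by
    refine (integrable_rho2_of_continuous hs0 hs1 (hc2.norm)).mono' hc2.aestronglyMeasurable
      (ae_of_all _ fun z => le_rfl)
  have hmain : HasFDerivAt (fun w => ∫ z, f (L z w) ∂(rho2meas s))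
      (∫ z, (fderiv ℝ f (L z w₀)).comp (L z) ∂(rho2meas s)) w₀ := by
    refine hasFDerivAt_integral_of_dominated_of_fderiv_le (s := univ)
      (bound := fun z => C * ‖L z‖)
      (F' := fun w z => (fderiv ℝ f (L z w)).comp (L z)) univ_mem ?_ ?_ ?_ ?_ ?_ ?_
    · refine Eventually.of_forall fun w => Continuous.aestronglyMeasurable ?_
      simp only [hLe]
      have := hf.continuous
      fun_prop
    · refine integrable_rho2_of_continuous hs0 hs1 ?_
      simp only [hLe]
      have := hf.continuous
      fun_prop
    · exact hc2.aestronglyMeasurable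
    · refine ae_of_all _ fun z w _ => (ContinuousLinearMap.opNorm_comp_le _ _).trans ?_
      gcongr
      exact hC _
    · exact integrable_rho2_of_continuous hs0 hs1 (by fun_prop)
    · exact ae_of_all _ fun z w _ => hD z w
  have hab : HasDerivWithinAt (fun τ => (a τ, b τ)) (a', b') S t := ha.prodMk hb
  have := hmain.comp_hasDerivWithinAt t hab
  rw [ContinuousLinearMap.integral_apply hI] at this
  simpa only [Function.comp_def, hLe, ContinuousLinearMap.comp_apply] using this

end Continuity

/-- if `(a(t), b(t))` solves the ODE system, then `ρ_t = ρ_{a(t),b(t)}` solves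
the Wasserstein-2 gradient flow: (i) the generated potential has gradient
`(2(1-A)x₁, 2(1-B)x₂)` in the interior of the support, and (ii) `ρ_t` is a weak solution
of the continuity equation with velocity `u = -∇W*ρ`. -/
theorem statement7 (s : ℝ) (hs0 : 0 < s) (hs1 : s < 1) (Ω : ℝ → ℝ) (hΩ : SatisfiesH Ω)
    (hsymm : ∀ θ, Ω (-θ) = Ω θ) (T : ℝ) (a b : ℝ → ℝ)
    (hapos : ∀ t ∈ Set.Ico (0 : ℝ) T, 0 < a t) (hbpos : ∀ t ∈ Set.Ico (0 : ℝ) T, 0 < b t)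
    (haC1 : ContDiffOn ℝ 1 a (Set.Ico 0 T)) (hbC1 : ContDiffOn ℝ 1 b (Set.Ico 0 T))
    (ha : ∀ t ∈ Set.Ico (0 : ℝ) T,
      HasDerivWithinAt a (2 * (Acoef s Ω (a t) (b t) - 1) * a t) (Set.Ico 0 T) t)
    (hb : ∀ t ∈ Set.Ico (0 : ℝ) T,
      HasDerivWithinAt b (2 * (Bcoef s Ω (a t) (b t) - 1) * b t) (Set.Ico 0 T) t) :
    (∀ t ∈ Set.Ico (0 : ℝ) T, ∀ x ∈ interior (msupport (rhoAB s (a t) (b t))),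
      HasFDerivAt (fun z : ℝ × ℝ => ∫ y, Wr s Ω (z - y) ∂(rhoAB s (a t) (b t)))
        ((2 * (1 - Acoef s Ω (a t) (b t)) * x.1) • ContinuousLinearMap.fst ℝ ℝ ℝ +
          (2 * (1 - Bcoef s Ω (a t) (b t)) * x.2) • ContinuousLinearMap.snd ℝ ℝ ℝ) x) ∧
    (∀ φ : ℝ × ℝ → ℝ, ContDiff ℝ (⊤ : ℕ∞) φ → HasCompactSupport φ →
      ∀ t ∈ Set.Ico (0 : ℝ) T,
        HasDerivWithinAt (fun τ => ∫ x, φ x ∂(rhoAB s (a τ) (b τ)))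
          (2 * ∫ x, ((Acoef s Ω (a t) (b t) - 1) * x.1 * fderiv ℝ φ x (1, 0) +
              (Bcoef s Ω (a t) (b t) - 1) * x.2 * fderiv ℝ φ x (0, 1))
            ∂(rhoAB s (a t) (b t)))
          (Set.Ico 0 T) t) := by
  have hΩ2 : ContDiff ℝ 2 Ω := by exact_mod_cast contDiff_infty.1 hΩ.1 2
  refine ⟨fun t ht x hx => hasFDerivAt_potential hs0 hs1 hΩ2 hΩ.2.2.2 hsymm (hapos t ht)
    (hbpos t ht) hx, fun φ hφ hφs t ht => ?_⟩
  refine (hasDerivWithinAt_integral hs0 hs1 hφ hφs (ha t ht) (hb t ht)).congr_deriv ?_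
  have hfc : Continuous (fderiv ℝ φ) := hφ.continuous_fderiv (by simp)
  rw [integral_rhoAB, ← integral_const_mul]
  · congr 1
    ext z
    have e : ∀ p q : ℝ, ((p, q) : ℝ × ℝ) = p • ((1, 0) : ℝ × ℝ) + q • ((0, 1) : ℝ × ℝ) := by simp
    rw [e (2 * _ * _ * _), map_add, map_smul, map_smul, smul_eq_mul, smul_eq_mul]
    ring
  · exact Continuous.measurable (by fun_prop)

end Aniso
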